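/- arXiv:math/0504581 — 3 statements merged into one kernel-verified Lean document; each statement's English description precedes it below -/
import Mathlib

section
/- Let K = F_2(x)(y) where y satisfies y^2 + x(x^2 + x + 1)·y + x(x^2 + x + 1)(x^4 + x + 1) = 0 (this quadratic polynomial in y is irreducible over F_2(x)). Then the ideal class group Cl(O_K), where O_K is the integral closure of F_2[x] in K, has order 4 and exponent two; that is, Cl(O_K) is isomorphic to (Z/2Z) × (Z/2Z). -/
open Polynomial

/-!
Write `h = x (x² + x + 1)` and `F = h (x⁴ + x + 1)`, so that `y² + h y + F = 0`; this is an
imaginary hyperelliptic curve of genus 3. Because `h` is squarefree and prime to `F / h`, the ring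
of integers is `F_2[x] ⊕ F_2[x] y` (`QuadClass.isModel_ringOfIntegers`): the trace and the norm of
an integral `u + v y` are polynomials, and this forces `u` and `v` to be polynomials.

In that ring every nonzero ideal is a polynomial multiple of some `(a, b + y)` with
`a ∣ N(b + y)` (`QuadClass.IsModel.exists_idl`). One may take `deg b < deg a`, and multiplying by
the conjugate of `b + y` replaces `a` by `N(b + y) / a`, which has smaller degree as soon as
`deg a ≥ 4` (Gauss reduction, `QuadClass.IsModel.reduce`). For `deg a ≤ 3` the condition
`a ∣ N(b + y)` is a finite computation over `F_2`: the only solutions have `b = 0` and `a` one of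
`1, x, x² + x + 1, h` (`QuadClass.reduced_pairs`). Hence every class is one of `1, p, q, p q`, with
`p`, `q` the classes of the ramified primes `(x, y)` and `(x² + x + 1, y)`, and `p² = q² = 1`.

None of `p`, `q`, `p q` is trivial, since the norm of an element `u + v y` with `v ≠ 0` has degree
at least `7` (`QuadClass.seven_le_natDegree_nrm`, `QuadClass.IsModel.not_isPrincipal`).
-/

namespace QuadClass

/-! ### Small residue computations over `F_2` -/

/-- The matrix `M` is the companion matrix of `T³ + a2 T² + a1 T + a0`, so this computes the norm
of `b + y` modulo a monic cubic: it vanishes only for the cubic `h` and `b = 0`. -/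
lemma residue_deg_three : ∀ a0 a1 a2 b0 b1 b2 : ZMod 2, ∀ M : Matrix (Fin 3) (Fin 3) (ZMod 2),
    M = !![0, 0, -a0; 1, 0, -a1; 0, 1, -a2] →
    (b0 • 1 + b1 • M + b2 • M ^ 2) ^ 2 - (b0 • 1 + b1 • M + b2 • M ^ 2) * (M * (M ^ 2 + M + 1))
      + M * (M ^ 2 + M + 1) * (M ^ 4 + M + 1) = 0 →
    b0 = 0 ∧ b1 = 0 ∧ b2 = 0 ∧ a0 = 0 ∧ a1 = 1 ∧ a2 = 1 := by
  intro a0 a1 a2 b0 b1 b2 M hM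
  subst hM
  revert a0 a1 a2 b0 b1 b2
  decide

lemma companion_three : ∀ a0 a1 a2 : ZMod 2, ∀ M : Matrix (Fin 3) (Fin 3) (ZMod 2),
    M = !![0, 0, -a0; 1, 0, -a1; 0, 1, -a2] →
    M ^ 3 + a2 • M ^ 2 + a1 • M + a0 • 1 = 0 := by
  intro a0 a1 a2 M hM
  subst hM
  revert a0 a1 a2
  decide

lemma residue_deg_two : ∀ a0 a1 b0 b1 : ZMod 2, ∀ M : Matrix (Fin 2) (Fin 2) (ZMod 2),
    M = !![0, -a0; 1, -a1] →
    (b0 • 1 + b1 • M) ^ 2 - (b0 • 1 + b1 • M) * (M * (M ^ 2 + M + 1))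
      + M * (M ^ 2 + M + 1) * (M ^ 4 + M + 1) = 0 →
    b0 = 0 ∧ b1 = 0 ∧ a0 = 1 ∧ a1 = 1 := by
  intro a0 a1 b0 b1 M hM
  subst hM
  revert a0 a1 b0 b1
  decide

lemma companion_two : ∀ a0 a1 : ZMod 2, ∀ M : Matrix (Fin 2) (Fin 2) (ZMod 2),
    M = !![0, -a0; 1, -a1] → M ^ 2 + a1 • M + a0 • 1 = 0 := by
  intro a0 a1 M hM
  subst hM
  revert a0 a1
  decide

lemma residue_deg_one : ∀ a0 b0 : ZMod 2,
    b0 ^ 2 - b0 * (-a0 * ((-a0) ^ 2 + -a0 + 1))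
      + -a0 * ((-a0) ^ 2 + -a0 + 1) * ((-a0) ^ 4 + -a0 + 1) = 0 → b0 = 0 ∧ a0 = 0 := by
  decide

/-- The polynomial `h = x (x² + x + 1)`, the coefficient of `y` in the defining equation. -/
noncomputable def hp : (ZMod 2)[X] := X * (X ^ 2 + X + 1)

/-- The polynomial `F = x (x² + x + 1) (x⁴ + x + 1)`, the constant coefficient. -/
noncomputable def Fp : (ZMod 2)[X] := X * (X ^ 2 + X + 1) * (X ^ 4 + X + 1)

/-- The norm `u² - u v h + v² F` of `u + v y`. -/
noncomputable abbrev nrm (u v : (ZMod 2)[X]) : (ZMod 2)[X] := u ^ 2 - u * v * hp + v ^ 2 * Fp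

lemma zmod2_eq_one : ∀ c : ZMod 2, c ≠ 0 → c = 1 := by decide

/-- The only reduced pairs `(a, b)`, that is `deg b < deg a ≤ 3` and `a ∣ N(b + y)`, are those
with `b = 0` and `a ∣ h`. -/
lemma reduced_pairs (a b : (ZMod 2)[X]) (ha : a ≠ 0) (hdeg : a.natDegree ≤ 3)
    (hb : b.degree < a.degree) (hdvd : a ∣ nrm b 1) :
    b = 0 ∧ (a = 1 ∨ a = X ∨ a = X ^ 2 + X + 1 ∨ a = hp) := by
  have hlead : a.coeff a.natDegree = 1 := zmod2_eq_one _ (by simpa using ha)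
  obtain ⟨c, hc⟩ := hdvd
  have hbc : ∀ n, a.natDegree ≤ n → b.coeff n = 0 := fun n hn =>
    coeff_eq_zero_of_degree_lt (hb.trans_le (degree_le_natDegree.trans (by exact_mod_cast hn)))
  obtain h | h | h | h : a.natDegree = 0 ∨ a.natDegree = 1 ∨ a.natDegree = 2 ∨ a.natDegree = 3 := by
    omega
  · rw [h] at hlead hbc
    have ea : a = 1 := by rw [eq_C_of_natDegree_eq_zero h, hlead, C_1]
    refine ⟨?_, Or.inl ea⟩
    ext n; simpa using hbc n (Nat.zero_le _)
  · rw [h] at hlead hbc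
    have ea : a = X + C (a.coeff 0) := by
      conv_lhs => rw [a.as_sum_range_C_mul_X_pow, h]
      simp [Finset.sum_range_succ, hlead]; ring
    have eb : b = C (b.coeff 0) := by
      ext n; cases n with
      | zero => simp
      | succ n => simpa [coeff_C] using hbc (n + 1) (by omega)
    generalize a.coeff 0 = a0 at ea
    generalize b.coeff 0 = b0 at eb
    have h1 := congrArg (eval (-a0)) hc
    rw [ea, eb] at h1
    simp only [nrm, hp, Fp, eval_add, eval_sub, eval_mul, eval_pow, eval_X, eval_C, eval_one,
      neg_add_cancel, zero_mul, mul_one, one_pow, one_mul] at h1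
    obtain ⟨rfl, rfl⟩ := residue_deg_one a0 b0 h1
    simp [ea, eb]
  · rw [h] at hlead hbc
    have ea : a = X ^ 2 + C (a.coeff 1) * X + C (a.coeff 0) := by
      conv_lhs => rw [a.as_sum_range_C_mul_X_pow, h]
      simp [Finset.sum_range_succ, hlead]; ring
    have eb : b = C (b.coeff 0) + C (b.coeff 1) * X := by
      ext n
      obtain rfl | rfl | ⟨n, rfl⟩ : n = 0 ∨ n = 1 ∨ ∃ m, n = m + 2 :=
        by rcases n with _ | _ | n <;> simp
      · simp
      · simp [coeff_C]
      · simpa [coeff_C, coeff_X] using hbc (n + 2) (by omega)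
    generalize a.coeff 0 = a0 at ea
    generalize a.coeff 1 = a1 at ea
    generalize b.coeff 0 = b0 at eb
    generalize b.coeff 1 = b1 at eb
    obtain ⟨M, hM⟩ : ∃ M : Matrix (Fin 2) (Fin 2) (ZMod 2), M = !![0, -a0; 1, -a1] := ⟨_, rfl⟩
    have h0 : aeval M a = 0 := by
      rw [ea]; simpa [Algebra.algebraMap_eq_smul_one] using companion_two a0 a1 M hM
    have h1 := congrArg (aeval M) hc
    rw [map_mul, h0, zero_mul, eb] at h1
    simp only [nrm, hp, Fp, map_add, map_sub, map_mul, map_pow, aeval_X, aeval_C, map_one, mul_one,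
      Algebra.algebraMap_eq_smul_one, one_pow, one_mul, smul_mul_assoc] at h1
    obtain ⟨rfl, rfl, rfl, rfl⟩ := residue_deg_two a0 a1 b0 b1 M hM
      (by simpa only [smul_mul_assoc, one_mul] using h1)
    simp [ea, eb]
  · rw [h] at hlead hbc
    have ea : a = X ^ 3 + C (a.coeff 2) * X ^ 2 + C (a.coeff 1) * X + C (a.coeff 0) := by
      conv_lhs => rw [a.as_sum_range_C_mul_X_pow, h]
      simp [Finset.sum_range_succ, hlead]; ring
    have eb : b = C (b.coeff 0) + C (b.coeff 1) * X + C (b.coeff 2) * X ^ 2 := by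
      ext n
      obtain rfl | rfl | rfl | ⟨n, rfl⟩ : n = 0 ∨ n = 1 ∨ n = 2 ∨ ∃ m, n = m + 3 :=
        by rcases n with _ | _ | _ | n <;> simp
      · simp
      · simp [coeff_X_pow, coeff_C]
      · simp
      · simpa [coeff_C, coeff_X, coeff_X_pow] using hbc (n + 3) (by omega)
    generalize a.coeff 0 = a0 at ea
    generalize a.coeff 1 = a1 at ea
    generalize a.coeff 2 = a2 at ea
    generalize b.coeff 0 = b0 at eb
    generalize b.coeff 1 = b1 at eb
    generalize b.coeff 2 = b2 at eb
    obtain ⟨M, hM⟩ : ∃ M : Matrix (Fin 3) (Fin 3) (ZMod 2),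
      M = !![0, 0, -a0; 1, 0, -a1; 0, 1, -a2] := ⟨_, rfl⟩
    have h0 : aeval M a = 0 := by
      rw [ea]; simpa [Algebra.algebraMap_eq_smul_one] using companion_three a0 a1 a2 M hM
    have h1 := congrArg (aeval M) hc
    rw [map_mul, h0, zero_mul, eb] at h1
    simp only [nrm, hp, Fp, map_add, map_sub, map_mul, map_pow, aeval_X, aeval_C, map_one, mul_one,
      Algebra.algebraMap_eq_smul_one, one_pow, one_mul, smul_mul_assoc] at h1
    obtain ⟨rfl, rfl, rfl, rfl, rfl, rfl⟩ := residue_deg_three a0 a1 a2 b0 b1 b2 M hM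
      (by simpa only [smul_mul_assoc, one_mul] using h1)
    refine ⟨by simp [eb], Or.inr (Or.inr (Or.inr ?_))⟩
    rw [ea, hp]; simp; ring

/-! ### Degrees of norms -/

lemma natDegree_hp : hp.natDegree = 3 := by
  unfold hp
  have : (X ^ 2 + X + 1 : (ZMod 2)[X]) ≠ 0 := fun h => by
    simpa [coeff_X, coeff_one] using congrArg (coeff · 0) h
  rw [natDegree_X_mul this]
  have : (X ^ 2 + X + 1 : (ZMod 2)[X]).natDegree = 2 := by compute_degree!
  omega

lemma natDegree_Fp : Fp.natDegree = 7 := by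
  have h0 : (X ^ 4 + X + 1 : (ZMod 2)[X]) ≠ 0 := fun h => by
    simpa [coeff_X, coeff_one] using congrArg (coeff · 0) h
  have h1 : hp ≠ 0 := fun h => by simpa [h] using natDegree_hp
  have h2 : (X ^ 4 + X + 1 : (ZMod 2)[X]).natDegree = 4 := by compute_degree!
  rw [show Fp = hp * (X ^ 4 + X + 1) from rfl, natDegree_mul h1 h0, natDegree_hp, h2]

lemma hp_ne_zero : hp ≠ 0 := fun h => by simpa [h] using natDegree_hp
lemma Fp_ne_zero : Fp ≠ 0 := fun h => by simpa [h] using natDegree_Fp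

/-- The degrees of `u²` and `v² F` have different parity and the middle term never dominates, so
no cancellation of leading terms occurs. -/
lemma seven_le_natDegree_nrm (u v : (ZMod 2)[X]) (hv : v ≠ 0) : 7 ≤ (nrm u v).natDegree := by
  have e1 : (u ^ 2).natDegree = 2 * u.natDegree := natDegree_pow u 2
  have e2 : (u * v * hp).natDegree ≤ u.natDegree + v.natDegree + 3 := by
    refine natDegree_mul_le.trans ?_
    rw [natDegree_hp]
    exact Nat.add_le_add_right natDegree_mul_le 3
  have e3 : (v ^ 2 * Fp).natDegree = 2 * v.natDegree + 7 := by
    rw [natDegree_mul (pow_ne_zero 2 hv) Fp_ne_zero, natDegree_pow, natDegree_Fp]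
  by_cases hd : v.natDegree + 4 ≤ u.natDegree
  · have hlt : (v ^ 2 * Fp - u * v * hp).natDegree < (u ^ 2).natDegree :=
      (natDegree_sub_le _ _).trans_lt (max_lt (by omega) (by omega))
    rw [show nrm u v = u ^ 2 + (v ^ 2 * Fp - u * v * hp) by unfold nrm; ring,
      natDegree_add_eq_left_of_natDegree_lt hlt]
    omega
  · have hlt : (u ^ 2 - u * v * hp).natDegree < (v ^ 2 * Fp).natDegree :=
      (natDegree_sub_le _ _).trans_lt (max_lt (by omega) (by omega))
    rw [natDegree_add_eq_right_of_natDegree_lt hlt]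
    omega

/-- The inequality that makes the reduction of ideals decrease the degree. -/
lemma natDegree_nrm_one_lt (a b : (ZMod 2)[X]) (ha : 4 ≤ a.natDegree)
    (hb : b.degree < a.degree) : (nrm b 1).natDegree < 2 * a.natDegree := by
  have hb' : b.natDegree < a.natDegree := by
    have ha0 : a ≠ 0 := by rintro rfl; simp at ha
    by_cases h0 : b = 0
    · subst h0; simp; omega
    · exact (natDegree_lt_natDegree_iff h0).2 hb
  have e1 : (b ^ 2).natDegree = 2 * b.natDegree := natDegree_pow b 2
  have e2 : (b * 1 * hp).natDegree ≤ b.natDegree + 3 := by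
    rw [mul_one]; exact natDegree_mul_le.trans (by rw [natDegree_hp])
  have e3 : ((1 : (ZMod 2)[X]) ^ 2 * Fp).natDegree = 7 := by rw [one_pow, one_mul, natDegree_Fp]
  refine (natDegree_add_le _ _).trans_lt (max_lt ((natDegree_sub_le _ _).trans_lt ?_) (by omega))
  exact max_lt (by omega) (by omega)

/-! ### The ring `F_2[x] ⊕ F_2[x] y` -/

section Ring

/-- The ring `O` is free over `F_2[x]` with basis `1, y`, and `y² + h y + F = 0`. -/
structure IsModel (O : Type*) [CommRing O] [Algebra (ZMod 2)[X] O] (y : O) : Prop where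
  eqn : y ^ 2 + algebraMap _ O hp * y + algebraMap _ O Fp = 0
  span : ∀ z : O, ∃ u v : (ZMod 2)[X], z = algebraMap _ O u + algebraMap _ O v * y
  indep : ∀ u v : (ZMod 2)[X], algebraMap _ O u + algebraMap _ O v * y = 0 → u = 0 ∧ v = 0

variable {O : Type*} [CommRing O] [Algebra (ZMod 2)[X] O] {y : O}

local notation "ι" => algebraMap (ZMod 2)[X] O

/-- The ideal `(a, b + y)`. -/
def idl (y : O) (a b : (ZMod 2)[X]) : Ideal O := Ideal.span {ι a, ι b + y}

lemma IsModel.ext (H : IsModel O y) {u v u' v' : (ZMod 2)[X]}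
    (h : ι u + ι v * y = ι u' + ι v' * y) : u = u' ∧ v = v' := by
  have := H.indep (u - u') (v - v') (by simp only [map_sub]; linear_combination h)
  exact ⟨sub_eq_zero.1 this.1, sub_eq_zero.1 this.2⟩

lemma IsModel.inj (H : IsModel O y) {u : (ZMod 2)[X]} (h : ι u = 0) : u = 0 :=
  (H.indep u 0 (by simp [h])).1

lemma IsModel.add_y_ne_zero (H : IsModel O y) (u : (ZMod 2)[X]) : ι u + y ≠ 0 := fun h => by
  simpa using (H.indep u 1 (by simpa using h)).2

lemma IsModel.mul_conj (H : IsModel O y) (u v : (ZMod 2)[X]) :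
    (ι u + ι v * y) * (ι (u - v * hp) - ι v * y) = ι (nrm u v) := by
  have := H.eqn
  simp only [nrm, map_add, map_sub, map_mul, map_pow] at this ⊢
  linear_combination (-ι v ^ 2) * this

/-- Multiplicativity of the norm, for a product lying in `F_2[x]`. -/
lemma IsModel.nrm_mul (H : IsModel O y) {u v s t a : (ZMod 2)[X]}
    (h : ι a = (ι u + ι v * y) * (ι s + ι t * y)) : a ^ 2 = nrm u v * nrm s t := by
  have e : ι a + ι 0 * y = ι (u * s - v * t * Fp) + ι (u * t + v * s - v * t * hp) * y := by
    rw [h]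
    have := H.eqn
    simp only [map_zero, map_add, map_sub, map_mul] at this ⊢
    linear_combination (ι v * ι t) * this
  obtain ⟨e1, e2⟩ := H.ext e
  rw [e1]
  simp only [nrm]
  linear_combination (-(u * s - v * t * Fp) * hp
    + Fp * (u * t + v * s - v * t * hp)) * e2

/-- Every nonzero ideal is a multiple of an ideal `(a, b + y)` with `a ∣ N(b + y)`. -/
lemma IsModel.exists_idl [IsDomain O] (H : IsModel O y) (I : Ideal O) (hI : I ≠ ⊥) :
    ∃ d a b : (ZMod 2)[X], d ≠ 0 ∧ a ≠ 0 ∧ a ∣ nrm b 1 ∧ I = Ideal.span {ι d} * idl y a b := by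
  have hy := H.eqn
  -- `J` is the ideal of all coefficients of `y` in elements of `I`.
  let J : Ideal (ZMod 2)[X] :=
    { carrier := {v | ∃ u, ι u + ι v * y ∈ I}
      zero_mem' := ⟨0, by simp⟩
      add_mem' := by
        rintro v v' ⟨u, hu⟩ ⟨u', hu'⟩
        refine ⟨u + u', ?_⟩
        convert I.add_mem hu hu' using 1
        simp only [map_add]; ring
      smul_mem' := by
        rintro c v ⟨u, hu⟩
        refine ⟨c * u, ?_⟩
        convert I.mul_mem_left (ι c) hu using 1
        simp only [smul_eq_mul, map_mul]; ring }
  obtain ⟨d, hd⟩ := (IsPrincipalIdealRing.principal J).principal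
  obtain ⟨e, he⟩ := (IsPrincipalIdealRing.principal (I.comap ι)).principal
  have hJ : ∀ u v, ι u + ι v * y ∈ I → d ∣ v := fun u v h => by
    have : v ∈ J := ⟨u, h⟩
    rw [hd] at this
    exact Ideal.mem_span_singleton.1 this
  have hE : ∀ u, ι u ∈ I ↔ e ∣ u := fun u => by
    rw [← Ideal.mem_comap, he]
    exact Ideal.mem_span_singleton
  obtain ⟨c, hc⟩ : ∃ c, ι c + ι d * y ∈ I := by
    have : d ∈ J := by rw [hd]; exact Ideal.mem_span_singleton_self d
    exact this
  have hd0 : d ≠ 0 := by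
    rintro rfl
    apply hI
    rw [eq_bot_iff]
    intro z hz
    obtain ⟨u, v, rfl⟩ := H.span z
    have hv : v = 0 := zero_dvd_iff.1 (hJ u v hz)
    subst hv
    have hu : u = 0 := zero_dvd_iff.1 (hJ 0 u (by simpa using I.mul_mem_right y hz))
    simp [hu]
  have hcd : d ∣ c := by
    have := hJ (-d * Fp) (c - d * hp) (by
      convert I.mul_mem_left y hc using 1
      simp only [map_sub, map_mul, map_neg] at hy ⊢
      linear_combination (-ι d) * hy)
    simpa using dvd_add this (dvd_mul_right d hp)
  have hde : d ∣ e := hJ 0 e (by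
    convert I.mul_mem_left y ((hE e).2 dvd_rfl) using 1
    simp [mul_comm])
  obtain ⟨b, rfl⟩ := hcd
  obtain ⟨a, rfl⟩ := hde
  have hι : ι d ≠ 0 := fun h => hd0 (H.inj h)
  have hN : d * a ∣ d * nrm b 1 := by
    rw [← hE]
    convert I.mul_mem_right (ι (b - 1 * hp) - ι 1 * y) hc using 1
    have := H.mul_conj b 1
    rw [map_mul, ← this]
    simp only [map_mul, map_one]; ring
  have hN' : a ∣ nrm b 1 := (mul_dvd_mul_iff_left hd0).1 hN
  have ha : a ≠ 0 := by
    rintro rfl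
    have h0 := seven_le_natDegree_nrm b 1 one_ne_zero
    rw [zero_dvd_iff.1 hN', natDegree_zero] at h0
    omega
  refine ⟨d, a, b, hd0, ha, hN', ?_⟩
  apply le_antisymm
  · intro z hz
    obtain ⟨u, v, rfl⟩ := H.span z
    obtain ⟨k, rfl⟩ := hJ _ _ hz
    have h1 : ι (u - k * (d * b)) ∈ I := by
      convert I.sub_mem hz (I.mul_mem_left (ι k) hc) using 1
      simp only [map_sub, map_mul]; ring
    obtain ⟨m, hm⟩ := (hE _).1 h1
    have hu : u = d * a * m + k * (d * b) := by linear_combination hm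
    rw [hu, Ideal.mem_span_singleton_mul]
    refine ⟨ι m * ι a + ι k * (ι b + y), Ideal.mem_span_pair.2 ⟨_, _, rfl⟩, ?_⟩
    simp only [map_add, map_mul]; ring
  · rw [idl, Ideal.span_mul_span', Set.singleton_mul, Set.image_pair, Ideal.span_le,
      Set.insert_subset_iff, Set.singleton_subset_iff]
    constructor
    · simpa using (hE (d * a)).2 dvd_rfl
    · change _ ∈ I
      convert hc using 1
      rw [map_mul]; ring

lemma idl_add_mul (a b c : (ZMod 2)[X]) : idl y a (b + c * a) = idl y a b := by
  apply le_antisymm <;> rw [idl, Ideal.span_le, Set.insert_subset_iff, Set.singleton_subset_iff]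
  · refine ⟨Ideal.subset_span (by simp), Ideal.mem_span_pair.2 ⟨ι c, 1, ?_⟩⟩
    simp only [map_add, map_mul]; ring
  · refine ⟨Ideal.subset_span (by simp), Ideal.mem_span_pair.2 ⟨-ι c, 1, ?_⟩⟩
    simp only [map_add, map_mul]; ring

/-- Up to the principal ideals of `h - b + y` (minus the conjugate of `b + y`) and `a`, the ideal
`(a, b + y)` equals `(N(b + y) / a, h - b + y)`. -/
lemma IsModel.idl_swap (H : IsModel O y) {a a' b : (ZMod 2)[X]} (h : nrm b 1 = a * a') :
    Ideal.span {ι (hp - b) + y} * idl y a b = Ideal.span {ι a} * idl y a' (hp - b) := by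
  have e : (ι (hp - b) + y) * (ι b + y) = - (ι a * ι a') := by
    rw [← map_mul, ← h, ← H.mul_conj]
    simp only [map_sub, map_mul, map_one]; ring
  simp only [idl, Ideal.span_mul_span', Set.singleton_mul, Set.image_pair, e]
  rw [Ideal.span_pair_comm, mul_comm (ι a) (ι (hp - b) + y)]
  rw [Ideal.span_insert, Ideal.span_insert, Ideal.span_singleton_neg]

/-- Every ideal `(a, b + y)` with `a ∣ N(b + y)` is equivalent to one of the four ideals `(a, y)`, `a ∣ h`. -/
lemma IsModel.reduce [IsDomain O] (H : IsModel O y) (n : ℕ) :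
    ∀ a b : (ZMod 2)[X], a.natDegree ≤ n → a ≠ 0 → a ∣ nrm b 1 →
    ∃ s t : O, s ≠ 0 ∧ t ≠ 0 ∧ ∃ a', (a' = 1 ∨ a' = X ∨ a' = X ^ 2 + X + 1 ∨ a' = hp) ∧
      Ideal.span {s} * idl y a b = Ideal.span {t} * idl y a' 0 := by
  induction n using Nat.strong_induction_on with
  | _ n ih =>
    intro a b hn ha hdvd
    have hlt : (b % a).degree < a.degree := EuclideanDomain.mod_lt b ha
    have hb : b = b % a + (b / a) * a := by
      rw [mul_comm]; exact (EuclideanDomain.mod_add_div b a).symm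
    have hdvd' : a ∣ nrm (b % a) 1 := by
      have e : nrm (b % a) 1 = nrm b 1 - a * ((b / a) * (b + b % a - hp)) := by
        simp only [nrm]
        linear_combination (-(b + b % a - hp)) * hb
      rw [e]
      exact dvd_sub hdvd (dvd_mul_right _ _)
    rw [hb, idl_add_mul]
    generalize b % a = r at *
    by_cases h3 : a.natDegree ≤ 3
    · obtain ⟨rfl, h⟩ := reduced_pairs a r ha h3 hlt hdvd'
      exact ⟨1, 1, one_ne_zero, one_ne_zero, a, h, rfl⟩
    · have h4 := natDegree_nrm_one_lt a r (by omega) hlt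
      obtain ⟨a', ha'⟩ := hdvd'
      have h0 : a' ≠ 0 := by
        rintro rfl
        have := seven_le_natDegree_nrm r 1 one_ne_zero
        simp [ha'] at this
      rw [ha', natDegree_mul ha h0] at h4
      obtain ⟨s, t, hs, ht, a'', h, e⟩ := ih a'.natDegree (by omega) a' (hp - r) le_rfl h0
        ⟨a, by rw [mul_comm, ← ha']; simp only [nrm]; ring⟩
      refine ⟨s * (ι (hp - r) + y), ι a * t, mul_ne_zero hs (H.add_y_ne_zero _),
        mul_ne_zero (fun h => ha (H.inj h)) ht, a'', h, ?_⟩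
      rw [← Ideal.span_singleton_mul_span_singleton, ← Ideal.span_singleton_mul_span_singleton,
        mul_assoc, H.idl_swap ha', mul_left_comm, e, mul_assoc]

/-- If `(a, y) = (z)` then `N(z)` divides `a²`, of degree at most `6`, so `z ∈ F_2[x]`; as `z`
divides `y`, it is a unit, whereas `a` divides `F` and is not. -/
lemma IsModel.not_isPrincipal (H : IsModel O y) {a : (ZMod 2)[X]} (ha0 : a ≠ 0)
    (ha : a.natDegree ≤ 3) (hu : ¬ IsUnit a) (hF : a ∣ Fp) : ¬ (idl y a 0).IsPrincipal := by
  rintro ⟨z, hz⟩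
  rw [Ideal.submodule_span_eq] at hz
  have ha_mem : ι a ∈ idl y a 0 := Ideal.subset_span (by simp)
  have hy_mem : y ∈ idl y a 0 := Ideal.subset_span (by simp)
  have hy := H.eqn
  rw [hz, Ideal.mem_span_singleton] at ha_mem hy_mem
  obtain ⟨w, hw⟩ := ha_mem
  obtain ⟨u, v, rfl⟩ := H.span z
  obtain ⟨s, t, rfl⟩ := H.span w
  have hN := H.nrm_mul hw
  have hN0 : nrm u v * nrm s t ≠ 0 := hN ▸ pow_ne_zero 2 ha0
  have hdeg := congrArg natDegree hN
  rw [natDegree_mul (left_ne_zero_of_mul hN0) (right_ne_zero_of_mul hN0), natDegree_pow] at hdeg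
  have hv : v = 0 := by
    by_contra h
    have := seven_le_natDegree_nrm u v h
    omega
  subst hv
  -- A generator would lie in `F_2[x]` and divide `y`, hence be a unit.
  obtain ⟨w', hw'⟩ := hy_mem
  obtain ⟨s', t', rfl⟩ := H.span w'
  have h1 := H.ext (u := 0) (v := 1) (u' := u * s') (v' := u * t') (by
    simp only [map_zero, map_one, map_mul] at hw' ⊢
    linear_combination hw')
  have hone : (1 : O) ∈ idl y a 0 := by
    rw [hz, Ideal.mem_span_singleton]
    exact ⟨ι t', by rw [map_zero, zero_mul, add_zero, ← map_mul, ← h1.2, map_one]⟩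
  obtain ⟨p, q, hpq⟩ := Ideal.mem_span_pair.1 hone
  obtain ⟨p1, p2, rfl⟩ := H.span p
  obtain ⟨q1, q2, rfl⟩ := H.span q
  have h2 := H.ext (u := 1) (v := 0) (u' := a * p1 - q2 * Fp)
    (v' := a * p2 + q1 - q2 * hp) (by
    simp only [map_zero, map_one, map_mul, map_add, map_sub] at hpq hy ⊢
    linear_combination -hpq + ι q2 * hy)
  exact hu (isUnit_of_dvd_one (h2.1 ▸ dvd_sub (dvd_mul_right _ _) (hF.mul_left _)))

/-- Prime factors of the discriminant ramify: `(a, y)² = (a)`. -/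
lemma IsModel.idl_sq (H : IsModel O y) {a g h' : (ZMod 2)[X]} (hF : Fp = a * g)
    (hh : hp = a * h') (hco : IsCoprime a g) : idl y a 0 * idl y a 0 = Ideal.span {ι a} := by
  have hy := H.eqn
  obtain ⟨r, s, hrs⟩ := hco
  have hrs' := congrArg ι hrs
  rw [hF, hh] at hy
  simp only [map_mul, map_add, map_one] at hy hrs'
  rw [idl, map_zero, zero_add, Ideal.span_pair_mul_span_pair]
  apply le_antisymm
  · rw [Ideal.span_le]
    rintro z (rfl | rfl | rfl | rfl)
    · exact Ideal.mem_span_singleton.2 ⟨ι a, rfl⟩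
    · exact Ideal.mem_span_singleton.2 ⟨y, rfl⟩
    · exact Ideal.mem_span_singleton.2 ⟨y, mul_comm _ _⟩
    · exact Ideal.mem_span_singleton.2 ⟨-(ι h' * y + ι g), by linear_combination hy⟩
  · rw [Ideal.span_singleton_le_iff_mem]
    have e : ι a = ι r * (ι a * ι a) + (-(ι s * ι h')) * (ι a * y) + (-ι s) * (y * y) := by
      linear_combination -ι a * hrs' + ι s * hy
    have m1 : ι a * ι a ∈ Ideal.span {ι a * ι a, ι a * y, y * ι a, y * y} :=
      Ideal.subset_span (by simp)
    have m2 : ι a * y ∈ Ideal.span {ι a * ι a, ι a * y, y * ι a, y * y} :=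
      Ideal.subset_span (by simp)
    have m3 : y * y ∈ Ideal.span {ι a * ι a, ι a * y, y * ι a, y * y} :=
      Ideal.subset_span (by simp)
    generalize Ideal.span {ι a * ι a, ι a * y, y * ι a, y * y} = I at *
    rw [e]
    exact I.add_mem (I.add_mem (I.mul_mem_left _ m1) (I.mul_mem_left _ m2)) (I.mul_mem_left _ m3)

lemma idl_mul {a a' : (ZMod 2)[X]} (hco : IsCoprime a a') :
    idl y a 0 * idl y a' 0 = idl y (a * a') 0 := by
  obtain ⟨r, s, hrs⟩ := hco
  have hrs' := congrArg ι hrs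
  simp only [map_mul, map_add, map_one] at hrs'
  simp only [idl, map_zero, zero_add, Ideal.span_pair_mul_span_pair]
  apply le_antisymm
  · rw [Ideal.span_le]
    have m : y ∈ Ideal.span {ι (a * a'), y} := Ideal.subset_span (by simp)
    rintro z (rfl | rfl | rfl | rfl)
    · exact Ideal.subset_span (by simp)
    · exact Ideal.mul_mem_left _ _ m
    · exact Ideal.mul_mem_right _ _ m
    · exact Ideal.mul_mem_right _ _ m
  · rw [Ideal.span_le]
    rintro z (rfl | rfl)
    · exact Ideal.subset_span (by simp)
    · have e : z = ι r * (ι a * z) + ι s * (z * ι a') := by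
        linear_combination -z * hrs'
      have m2 : ι a * z ∈ Ideal.span {ι a * ι a', ι a * z, z * ι a', z * z} :=
        Ideal.subset_span (by simp)
      have m3 : z * ι a' ∈ Ideal.span {ι a * ι a', ι a * z, z * ι a', z * z} :=
        Ideal.subset_span (by simp)
      generalize Ideal.span {ι a * ι a', ι a * z, z * ι a', z * z} = I at *
      change z ∈ I
      rw [e]
      exact I.add_mem (I.mul_mem_left _ m2) (I.mul_mem_left _ m3)

/-! ### The four classes -/

lemma two_eq_zero : (2 : (ZMod 2)[X]) = 0 := by
  rw [← C_ofNat]; exact (congrArg C (by decide : (OfNat.ofNat 2 : ZMod 2) = 0)).trans C_0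

lemma coprime_X : IsCoprime (X : (ZMod 2)[X]) ((X ^ 2 + X + 1) * (X ^ 4 + X + 1)) :=
  ⟨-(X ^ 5 + X ^ 4 + X ^ 3 + X ^ 2 + 2 * X + 2), 1, by ring⟩

lemma coprime_X' : IsCoprime (X : (ZMod 2)[X]) (X ^ 2 + X + 1) :=
  coprime_X.of_mul_right_left

lemma coprime_quartic : IsCoprime (X ^ 2 + X + 1 : (ZMod 2)[X]) (X ^ 4 + X + 1) :=
  -- `X ^ 4 + X + 1 = (X ^ 2 - X) * (X ^ 2 + X + 1) + (2 * X + 1)` and `2 = 0`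
  ⟨-(X ^ 2 - X), 1, by linear_combination X * two_eq_zero⟩

lemma coprime_quadratic : IsCoprime (X ^ 2 + X + 1 : (ZMod 2)[X]) (X * (X ^ 4 + X + 1)) :=
  coprime_X'.symm.mul_right coprime_quartic

lemma natDegree_quadratic : (X ^ 2 + X + 1 : (ZMod 2)[X]).natDegree = 2 := by compute_degree!

/-- A commutative group `{1, p, q, p q}` with `p² = q² = 1` and `p, q, p q ≠ 1` is a Klein
four-group. -/
lemma isKleinFour_of_generators {G : Type*} [CommGroup G] (p q : G) (hp2 : p * p = 1)
    (hq2 : q * q = 1) (hp1 : p ≠ 1) (hq1 : q ≠ 1) (hpq1 : p * q ≠ 1)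
    (hall : ∀ c : G, c = 1 ∨ c = p ∨ c = q ∨ c = p * q) : IsKleinFour G := by
  classical
  have hpq : p ≠ q := fun h => hpq1 (h ▸ hp2)
  have hcard : Nat.card G = 4 := by
    have hu : (Set.univ : Set G) = (({1, p, q, p * q} : Finset G) : Set G) := by
      ext c; simpa using hall c
    rw [← Set.ncard_univ, hu, Set.ncard_coe_finset]
    rw [Finset.card_insert_of_notMem, Finset.card_insert_of_notMem,
      Finset.card_insert_of_notMem, Finset.card_singleton]
    · simpa using hp1
    · simp [hpq, hq1]
    · simp [hp1.symm, hq1.symm, hpq1.symm]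
  have hsq : ∀ c : G, c ^ 2 = 1 := by
    intro c
    rcases hall c with rfl | rfl | rfl | rfl
    · simp
    · rw [sq, hp2]
    · rw [sq, hq2]
    · rw [mul_pow, sq, sq, hp2, hq2, one_mul]
  refine ⟨hcard, ?_⟩
  refine ((Nat.dvd_prime Nat.prime_two).1 (Monoid.exponent_dvd_of_forall_pow_eq_one hsq)).resolve_left
    fun h => hp1 ?_
  simpa [h] using Monoid.pow_exponent_eq_one p

lemma IsModel.idl_ne_zero (H : IsModel O y) (a : (ZMod 2)[X]) : idl y a 0 ≠ 0 := fun h => by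
  have h0 : y ∈ idl y a 0 := Ideal.subset_span (by simp)
  rw [h, Ideal.zero_eq_bot, Ideal.mem_bot] at h0
  exact H.add_y_ne_zero 0 (by simpa using h0)

theorem IsModel.isKleinFour [IsDedekindDomain O] (H : IsModel O y) :
    IsKleinFour (ClassGroup O) := by
  have hm : ∀ a, idl y a 0 ∈ nonZeroDivisors (Ideal O) :=
    fun a => mem_nonZeroDivisors_of_ne_zero (H.idl_ne_zero a)
  have hprod : ClassGroup.mk0 ⟨_, hm X⟩ * ClassGroup.mk0 ⟨_, hm (X ^ 2 + X + 1)⟩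
      = ClassGroup.mk0 ⟨_, hm hp⟩ := by
    rw [← map_mul]
    exact congrArg _ (Subtype.ext (idl_mul coprime_X'))
  have hsq : ∀ {a g h' : (ZMod 2)[X]}, Fp = a * g → hp = a * h' → IsCoprime a g →
      ClassGroup.mk0 ⟨_, hm a⟩ * ClassGroup.mk0 ⟨_, hm a⟩ = 1 := fun hF hh hco => by
    rw [← map_mul]
    refine (ClassGroup.mk0_eq_one_iff (mul_mem (hm _) (hm _))).2 ⟨_, H.idl_sq hF hh hco⟩
  refine isKleinFour_of_generators (ClassGroup.mk0 ⟨_, hm X⟩)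
    (ClassGroup.mk0 ⟨_, hm (X ^ 2 + X + 1)⟩) ?_ ?_ ?_ ?_ ?_ ?_
  · exact hsq (g := (X ^ 2 + X + 1) * (X ^ 4 + X + 1)) (mul_assoc _ _ _) rfl coprime_X
  · exact hsq (g := X * (X ^ 4 + X + 1)) (h' := X) (by unfold Fp; ring) (mul_comm _ _)
      coprime_quadratic
  · rw [Ne, ClassGroup.mk0_eq_one_iff]
    exact H.not_isPrincipal X_ne_zero (by simp) not_isUnit_X ⟨_, mul_assoc _ _ _⟩
  · rw [Ne, ClassGroup.mk0_eq_one_iff]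
    refine H.not_isPrincipal (fun h => ?_) (by rw [natDegree_quadratic]; omega) (fun h => ?_)
      ⟨X * (X ^ 4 + X + 1), by unfold Fp; ring⟩
    · simpa [h] using natDegree_quadratic
    · simpa [natDegree_eq_zero_of_isUnit h] using natDegree_quadratic
  · rw [hprod, Ne, ClassGroup.mk0_eq_one_iff]
    refine H.not_isPrincipal hp_ne_zero natDegree_hp.le (fun h => ?_) ⟨_, rfl⟩
    simpa [natDegree_eq_zero_of_isUnit h] using natDegree_hp
  · intro c
    rw [hprod]
    obtain ⟨⟨I, hI⟩, rfl⟩ := ClassGroup.mk0_surjective c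
    obtain ⟨d, a, b, hd, ha, hdvd, hIeq⟩ := H.exists_idl I (nonZeroDivisors.ne_zero hI)
    obtain ⟨s, t, hs, ht, a', h, e⟩ := H.reduce _ a b le_rfl ha hdvd
    have hc : ClassGroup.mk0 ⟨I, hI⟩ = ClassGroup.mk0 ⟨_, hm a'⟩ := by
      rw [ClassGroup.mk0_eq_mk0_iff]
      refine ⟨s, t * ι d, hs, mul_ne_zero ht fun h => hd (H.inj h), ?_⟩
      simp only [← Ideal.span_singleton_mul_span_singleton, hIeq]
      rw [mul_left_comm, e, mul_left_comm, mul_assoc]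
    rw [hc]
    rcases h with rfl | rfl | rfl | rfl
    · left
      rw [ClassGroup.mk0_eq_one_iff]
      refine ⟨1, ?_⟩
      rw [Ideal.submodule_span_eq, Ideal.span_singleton_one, Ideal.eq_top_iff_one]
      exact Ideal.subset_span (by simp)
    · exact Or.inr (Or.inl rfl)
    · exact Or.inr (Or.inr (Or.inl rfl))
    · exact Or.inr (Or.inr (Or.inr rfl))

end Ring

/-! ### The ring of integers -/

section Integers

lemma squarefree_hp : Squarefree hp := by
  unfold hp
  refine Separable.squarefree (separable_X.mul ?_ coprime_X')
  refine separable_def' _ |>.2 ⟨0, 1, ?_⟩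
  simp only [derivative_add, derivative_X_pow, derivative_X, derivative_one]
  have h := congrArg C (by decide : ((2 : ℕ) : ZMod 2) = 0)
  simp only [C_0] at h
  rw [h]; ring

lemma coprime_hp : IsCoprime hp (X ^ 4 + X + 1) :=
  coprime_X.of_mul_right_right.mul_left coprime_quartic

/-- If `v h` (up to sign the trace of `u + v y`, as `2 = 0`) and the norm of `u + v y` are
polynomials, then so are `u` and `v`. This is where squarefreeness of `h` and coprimality of `h`
with `F / h` enter: they make the affine curve smooth above the zeros of `h`. -/
lemma coords_integral {u v : RatFunc (ZMod 2)} {w n : (ZMod 2)[X]}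
    (hw : algebraMap _ _ w = v * algebraMap _ _ hp)
    (hn : algebraMap _ _ n = u ^ 2 - u * v * algebraMap _ _ hp + v ^ 2 * algebraMap _ _ Fp) :
    ∃ u' v' : (ZMod 2)[X], algebraMap _ _ u' = u ∧ algebraMap _ _ v' = v := by
  have hinj := IsFractionRing.injective (ZMod 2)[X] (RatFunc (ZMod 2))
  have hh : algebraMap (ZMod 2)[X] (RatFunc (ZMod 2)) hp ≠ 0 := fun h =>
    hp_ne_zero (hinj (by rw [h, map_zero]))
  have hco := coprime_hp
  have hrad := squarefree_hp.isRadical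
  have h0 := hp_ne_zero
  rw [show Fp = hp * (X ^ 4 + X + 1) from rfl, map_mul] at hn
  generalize (X ^ 4 + X + 1 : (ZMod 2)[X]) = g at *
  generalize hp = h at *
  -- `u h` is integral, being a root of `T² - w h T + (w² h g - h² n)`.
  obtain ⟨s, hs⟩ : ∃ s, algebraMap (ZMod 2)[X] (RatFunc (ZMod 2)) s = u * algebraMap _ _ h := by
    refine IsIntegrallyClosed.isIntegral_iff.1
      ⟨X ^ 2 + C (-(w * h)) * X + C (w ^ 2 * (h * g) - h ^ 2 * n), by monicity!, ?_⟩
    simp only [eval₂_add, eval₂_mul, eval₂_pow, eval₂_X, eval₂_C, C_neg, C_sub, C_pow, eval₂_neg, eval₂_sub,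
      hw, hn, map_mul]
    ring
  have e1 : s ^ 2 - s * w * h + w ^ 2 * (h * g) = h ^ 2 * n := by
    apply hinj
    simp only [map_add, map_mul, map_sub, map_pow, hw, hn, hs]
    ring
  obtain ⟨m, rfl⟩ : h ∣ s :=
    hrad 2 s ⟨h * n + s * w - w ^ 2 * g, by linear_combination e1⟩
  obtain ⟨k, rfl⟩ : h ∣ w := by
    refine hrad 2 w (hco.dvd_of_dvd_mul_right ⟨n - m ^ 2 + m * w, ?_⟩)
    apply mul_left_cancel₀ h0
    linear_combination e1
  refine ⟨m, k, mul_right_cancel₀ hh ?_, mul_right_cancel₀ hh ?_⟩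
  · rw [← hs, map_mul, mul_comm]
  · rw [← hw, map_mul, mul_comm]

variable {L : Type*} [Field L] [Algebra (RatFunc (ZMod 2)) L] [Algebra (ZMod 2)[X] L]
  [IsScalarTower (ZMod 2)[X] (RatFunc (ZMod 2)) L]

/-- The integral closure of `F_2[x]` is `F_2[x] ⊕ F_2[x] y`. -/
lemma isModel_ringOfIntegers (y : L)
    (hy : y ^ 2 + algebraMap (ZMod 2)[X] L hp * y + algebraMap (ZMod 2)[X] L Fp = 0)
    (hspan : ∀ z : L, ∃ u v : RatFunc (ZMod 2), z = algebraMap _ L u + algebraMap _ L v * y)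
    (hindep : ∀ u v : RatFunc (ZMod 2), algebraMap _ L u + algebraMap _ L v * y = 0 →
      u = 0 ∧ v = 0)
    (σ : L →ₐ[RatFunc (ZMod 2)] L) (hσ : σ y = -algebraMap (ZMod 2)[X] L hp - y) :
    ∃ y' : FunctionField.ringOfIntegers (ZMod 2) L, IsModel _ y' := by
  have hcomp : ∀ p, algebraMap (ZMod 2)[X] L p = algebraMap (RatFunc (ZMod 2)) L
    (algebraMap _ _ p) := IsScalarTower.algebraMap_apply _ _ _
  have hinj := IsFractionRing.injective (ZMod 2)[X] (RatFunc (ZMod 2))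
  have hinjL := (algebraMap (RatFunc (ZMod 2)) L).injective
  have hyint : IsIntegral (ZMod 2)[X] y := by
    refine ⟨X ^ 2 + C hp * X + C Fp, ?_, ?_⟩
    · monicity!
    · simpa [eval₂_add, eval₂_mul, eval₂_pow] using hy
  refine ⟨⟨y, hyint⟩, ?_, ?_, ?_⟩
  · exact Subtype.ext hy
  · rintro ⟨z, hz⟩
    have hz : IsIntegral (ZMod 2)[X] z := hz
    obtain ⟨u, v, rfl⟩ := hspan z
    have hz' : IsIntegral (ZMod 2)[X] (σ (algebraMap _ L u + algebraMap _ L v * y)) :=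
      hz.map (σ.restrictScalars (ZMod 2)[X])
    have hσz : σ (algebraMap _ L u + algebraMap _ L v * y) =
        algebraMap _ L u + algebraMap _ L v * (-algebraMap (ZMod 2)[X] L hp - y) := by
      rw [map_add, map_mul, AlgHom.commutes, AlgHom.commutes, hσ]
    rw [hσz] at hz'
    have key : ∀ t : RatFunc (ZMod 2), IsIntegral (ZMod 2)[X] (algebraMap _ L t) →
        ∃ p, algebraMap (ZMod 2)[X] (RatFunc (ZMod 2)) p = t := fun t ht =>
      IsIntegrallyClosed.isIntegral_iff.1
        ((isIntegral_algebraMap_iff hinjL).1 ht)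
    have h2 : (2 : L) = 0 := by
      have := congrArg (algebraMap (ZMod 2)[X] L) two_eq_zero
      rwa [map_ofNat, map_zero] at this
    obtain ⟨w, hw⟩ := key (v * algebraMap _ _ hp) (by
      have e : algebraMap (RatFunc (ZMod 2)) L (v * algebraMap _ _ hp) =
          -((algebraMap _ L u + algebraMap _ L v * y) +
            (algebraMap _ L u + algebraMap _ L v * (-algebraMap (ZMod 2)[X] L hp - y))) := by
        rw [map_mul, ← hcomp]
        linear_combination algebraMap _ L u * h2
      rw [e]
      exact (hz.add hz').neg)
    obtain ⟨n, hn⟩ := key (u ^ 2 - u * v * algebraMap _ _ hp + v ^ 2 * algebraMap _ _ Fp) (by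
      have e : algebraMap (RatFunc (ZMod 2)) L
          (u ^ 2 - u * v * algebraMap _ _ hp + v ^ 2 * algebraMap _ _ Fp) =
          (algebraMap _ L u + algebraMap _ L v * y) *
            (algebraMap _ L u + algebraMap _ L v * (-algebraMap (ZMod 2)[X] L hp - y)) := by
        rw [map_add, map_sub, map_mul, map_mul, map_mul, map_pow, map_pow, ← hcomp, ← hcomp]
        linear_combination (algebraMap _ L v) ^ 2 * hy
      rw [e]
      exact hz.mul hz')
    obtain ⟨u', v', rfl, rfl⟩ := coords_integral hw hn
    refine ⟨u', v', Subtype.ext ?_⟩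
    exact (congrArg₂ (fun s t => s + t * y) (hcomp u') (hcomp v')).symm
  · intro u v h
    have h' : algebraMap (ZMod 2)[X] L u + algebraMap (ZMod 2)[X] L v * y = 0 :=
      congrArg Subtype.val h
    rw [hcomp, hcomp] at h'
    obtain ⟨h1, h2⟩ := hindep _ _ h'
    exact ⟨hinj (by rw [h1, map_zero]), hinj (by rw [h2, map_zero])⟩

end Integers

/-! ### Coordinates in a quadratic extension -/

section Extension

variable (f : (RatFunc (ZMod 2))[X])

lemma adjoinRoot_span (hf : f.Monic) (hd : f.natDegree = 2) (z : AdjoinRoot f) :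
    ∃ u v : RatFunc (ZMod 2), z = algebraMap _ _ u + algebraMap _ _ v * AdjoinRoot.root f := by
  obtain ⟨g, rfl⟩ := AdjoinRoot.mk_surjective z
  have hdeg : (g %ₘ f).degree ≤ 1 := by
    have := degree_modByMonic_lt g hf
    rw [degree_eq_natDegree hf.ne_zero, hd] at this
    exact Order.le_of_lt_succ this
  obtain ⟨a, b, hab⟩ := exists_eq_X_add_C_of_natDegree_le_one (natDegree_le_of_degree_le hdeg)
  refine ⟨b, a, ?_⟩
  have h1 : AdjoinRoot.mk f g = AdjoinRoot.mk f (g %ₘ f) := by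
    rw [AdjoinRoot.mk_eq_mk]
    exact ⟨g /ₘ f, by linear_combination -(modByMonic_add_div g f)⟩
  rw [h1, hab]
  simp [AdjoinRoot.algebraMap_eq, add_comm]

lemma adjoinRoot_indep (hf : f.Monic) (hd : f.natDegree = 2) (u v : RatFunc (ZMod 2))
    (h : algebraMap _ _ u + algebraMap _ _ v * AdjoinRoot.root f = 0) : u = 0 ∧ v = 0 := by
  have h1 : AdjoinRoot.mk f (C v * X + C u) = 0 := by
    rw [← h]; simp [AdjoinRoot.algebraMap_eq, add_comm]
  rw [AdjoinRoot.mk_eq_zero] at h1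
  have h2 : C v * X + C u = 0 := by
    refine eq_zero_of_dvd_of_degree_lt h1 (degree_linear_le.trans_lt ?_)
    rw [degree_eq_natDegree hf.ne_zero, hd]
    exact_mod_cast one_lt_two
  exact ⟨by simpa using congrArg (coeff · 0) h2, by simpa using congrArg (coeff · 1) h2⟩

end Extension

end QuadClass

open QuadClass in
theorem class_group_statement_13
    (f : Polynomial (RatFunc (ZMod 2)))
    (hf : f = X ^ 2 + C (RatFunc.X * (RatFunc.X ^ 2 + RatFunc.X + 1)) * X + C (RatFunc.X * (RatFunc.X ^ 2 + RatFunc.X + 1) * (RatFunc.X ^ 4 + RatFunc.X + 1)))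
    [Fact (Irreducible f)] :
    Nat.card (ClassGroup (FunctionField.ringOfIntegers (ZMod 2) (AdjoinRoot f))) = 4 ∧
      (∀ c : ClassGroup (FunctionField.ringOfIntegers (ZMod 2) (AdjoinRoot f)), c ^ 2 = 1) ∧
      Nonempty (ClassGroup (FunctionField.ringOfIntegers (ZMod 2) (AdjoinRoot f)) ≃* Multiplicative (ZMod 2 × ZMod 2)) := by
  have hh : (RatFunc.X * (RatFunc.X ^ 2 + RatFunc.X + 1) : RatFunc (ZMod 2)) =
    algebraMap _ _ hp := by simp [hp]
  have hF : (RatFunc.X * (RatFunc.X ^ 2 + RatFunc.X + 1) * (RatFunc.X ^ 4 + RatFunc.X + 1) :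
    RatFunc (ZMod 2)) = algebraMap _ _ Fp := by simp [Fp]
  rw [hF, hh] at hf
  have hmonic : f.Monic := by rw [hf]; monicity!
  have hdeg : f.natDegree = 2 := by rw [hf]; compute_degree!
  have hcomp : ∀ p, algebraMap (ZMod 2)[X] (AdjoinRoot f) p = AdjoinRoot.of f (algebraMap _ _ p) :=
    IsScalarTower.algebraMap_apply (ZMod 2)[X] (RatFunc (ZMod 2)) (AdjoinRoot f)
  have hroot : AdjoinRoot.root f ^ 2 + algebraMap (ZMod 2)[X] (AdjoinRoot f) hp * AdjoinRoot.root f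
      + algebraMap (ZMod 2)[X] (AdjoinRoot f) Fp = 0 := by
    have h := congrArg (AdjoinRoot.mk f) hf
    rw [AdjoinRoot.mk_self] at h
    rw [h, hcomp, hcomp, map_add, map_add, map_mul, map_pow, AdjoinRoot.mk_X, AdjoinRoot.mk_C,
      AdjoinRoot.mk_C]
  -- The conjugation `y ↦ -h - y`.
  let σ : AdjoinRoot f →ₐ[RatFunc (ZMod 2)] AdjoinRoot f :=
    AdjoinRoot.liftAlgHom f (Algebra.ofId _ _)
      (-algebraMap (ZMod 2)[X] (AdjoinRoot f) hp - AdjoinRoot.root f) (by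
        have h : ∀ z, eval₂ (algebraMap (RatFunc (ZMod 2)) (AdjoinRoot f)) z f = z ^ 2 +
            algebraMap (ZMod 2)[X] (AdjoinRoot f) hp * z
            + algebraMap (ZMod 2)[X] (AdjoinRoot f) Fp := fun z => by
          rw [congrArg (eval₂ _ z) hf]
          simp only [eval₂_add, eval₂_mul, eval₂_pow, eval₂_X, eval₂_C, hcomp]
          rfl
        refine (h _).trans ?_
        linear_combination hroot)
  obtain ⟨y, H⟩ := isModel_ringOfIntegers (AdjoinRoot.root f) hroot (adjoinRoot_span f hmonic hdeg)
    (adjoinRoot_indep f hmonic hdeg) σ (AdjoinRoot.liftAlgHom_root ..)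
  have : FunctionField (ZMod 2) (AdjoinRoot f) :=
    (AdjoinRoot.powerBasis hmonic.ne_zero).finite
  have hsep : Algebra.IsSeparable (RatFunc (ZMod 2)) (AdjoinRoot f) := by
    have h1 : f.Separable := by
      have h0 : algebraMap (ZMod 2)[X] (RatFunc (ZMod 2)) hp ≠ 0 := fun h =>
        hp_ne_zero (IsFractionRing.injective (ZMod 2)[X] _ (by rw [h, map_zero]))
      have h2 : (C 2 : (RatFunc (ZMod 2))[X]) = 0 := by
        have := congrArg (algebraMap (ZMod 2)[X] (RatFunc (ZMod 2))) two_eq_zero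
        rw [map_ofNat, map_zero] at this
        rw [this, C_0]
      refine separable_def' _ |>.2 ⟨0, C (algebraMap _ _ hp)⁻¹, ?_⟩
      have hd : derivative f = C (algebraMap _ _ hp) := by
        rw [hf]
        simp only [derivative_add, derivative_C_mul, derivative_X_pow, derivative_X, derivative_C]
        simp [h2]
      rw [hd, zero_mul, zero_add, ← C_mul, inv_mul_cancel₀ h0, C_1]
    have h2 : IsSeparable (RatFunc (ZMod 2)) (AdjoinRoot.root f) :=
      h1.of_dvd (minpoly.dvd _ _ (by simp))
    rw [← IntermediateField.isSeparable_adjoin_simple_iff_isSeparable,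
      IntermediateField.adjoin_root_eq_top] at h2
    exact AlgEquiv.Algebra.isSeparable IntermediateField.topEquiv
  have := H.isKleinFour
  refine ⟨IsKleinFour.card_four, fun c => ?_, IsKleinFour.nonempty_mulEquiv⟩
  rw [sq, IsKleinFour.mul_self]
end

section
/- Let K = F_3(x)(y) where y satisfies y^2 = 2x(x + 1)(x^3 + x^2 + x + 2) (the polynomial Y^2 − 2x(x+1)(x^3+x^2+x+2) is irreducible over F_3(x)). Then the ideal class group Cl(O_K), where O_K is the integral closure of F_3[x] in K, has order 4 and exponent two; that is, Cl(O_K) is isomorphic to (Z/2Z) × (Z/2Z). -/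
/-!
Write `A = 𝔽₃[x]`, `d = 2x(x+1)(x³+x²+x+2)` and `O` for the integral closure of `A` in `K`.

Since `d` is squarefree of odd degree, `O = A ⊕ A y` (`exists_rep_of_isIntegral`), and a norm
`a² - d b²` with `b ≠ 0` has degree at least `5` (`norm_natDegree`), because the degrees of `a²`
and `d b²` have different parities. The class group is computed by Mumford's description of ideals
and Cantor's reduction:

* up to principal factors, every nonzero ideal is `(u, v + y)` with `u ∣ v² - d`
  (`exists_mumford`);
* one may take `deg v < deg u`, and multiplication by `y - v` shows that `(u, v + y)` is equivalent
  to `(u', -v + y)` where `v² - d = u u'`; this lowers the degree of `u` as soon as `deg u ≥ 3`;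
* the finitely many pairs with `u` monic of degree at most `2` leave only `v = 0` and
  `u = 1, x, x + 1, x(x+1)` (`small_cases`).

So the class group consists of the classes of the ideals `(u, y)` for these four `u`. Their squares
are the principal ideals `(u)` (`mumford_sq`), and `(x, y)(x+1, y) = (x(x+1), y)` (`mumford_mul`).
For `u ≠ 1` the ideal `(u, y)` is not principal (`not_isPrincipal`): the norm of a generator would
divide `u`, hence have degree at most `2`, hence be the square of an element of `A`; as `u` is
squarefree the generator would be a unit, whereas `(u, y)` is a proper ideal. The class group is
therefore a Klein four-group.
-/

open Polynomial

noncomputable section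
namespace HyperellipticClassGroup

/-! ### The polynomial `d` and norms -/

/-- The right-hand side `d` of the equation `y² = d`, as a polynomial. -/
def dPoly : (ZMod 3)[X] := 2 * X * (X + 1) * (X ^ 3 + X ^ 2 + X + 2)

lemma three_eq_zero : (3 : (ZMod 3)[X]) = 0 := by
  have h : ((3 : ℕ) : (ZMod 3)[X]) = 0 := CharP.cast_eq_zero _ 3
  exact_mod_cast h

lemma dPoly_natDegree : dPoly.natDegree = 5 := by
  have h : dPoly = C 2 * X ^ 5 + X ^ 4 + X ^ 3 + X := by
    rw [dPoly, show (C 2 : (ZMod 3)[X]) = 2 from rfl]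
    linear_combination (X ^ 4 + X ^ 3 + 2 * X ^ 2 + X) * three_eq_zero
  have h2 : (2 : ZMod 3) ≠ 0 := by decide
  rw [h]
  compute_degree!

lemma dPoly_ne_zero : dPoly ≠ 0 := by
  intro h
  have := dPoly_natDegree
  simp [h] at this

lemma dPoly_squarefree : Squarefree dPoly := by
  -- A Bézout relation between `dPoly` and its derivative.
  refine Polynomial.Separable.squarefree
    ⟨1 + 2 * X + 2 * X ^ 2, 1 + 2 * X + X ^ 2 + 2 * X ^ 3, ?_⟩
  have h : derivative dPoly = 1 + X ^ 3 + X ^ 4 := by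
    have h : dPoly = 2 * X ^ 5 + X ^ 4 + X ^ 3 + X := by
      rw [dPoly]
      linear_combination (X ^ 4 + X ^ 3 + 2 * X ^ 2 + X) * three_eq_zero
    rw [h]
    simp only [derivative_add, derivative_mul, derivative_X_pow, derivative_X, derivative_ofNat]
    simp only [map_natCast]
    push_cast
    linear_combination (3 * X ^ 4 + X ^ 3 + X ^ 2) * three_eq_zero
  rw [h, dPoly]
  linear_combination (2 * X + 5 * X ^ 2 + 9 * X ^ 3 + 9 * X ^ 4 + 7 * X ^ 5 + 5 * X ^ 6
    + 2 * X ^ 7) * three_eq_zero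

/-- The degrees of `a ^ 2` and `dPoly * b ^ 2` have different parities, so their leading terms
cannot cancel. -/
lemma norm_natDegree (a b : (ZMod 3)[X]) (hb : b ≠ 0) :
    5 ≤ (a ^ 2 - dPoly * b ^ 2).natDegree := by
  have h1 : (a ^ 2).natDegree = 2 * a.natDegree := natDegree_pow a 2
  have h2 : (dPoly * b ^ 2).natDegree = 5 + 2 * b.natDegree := by
    rw [natDegree_mul dPoly_ne_zero (pow_ne_zero 2 hb), natDegree_pow, dPoly_natDegree]
  rcases lt_or_gt_of_ne (show (a ^ 2).natDegree ≠ (dPoly * b ^ 2).natDegree by omega) with h | h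
  · rw [natDegree_sub_eq_right_of_natDegree_lt h]; omega
  · rw [natDegree_sub_eq_left_of_natDegree_lt h]; omega

lemma norm_ne_zero (a b : (ZMod 3)[X]) (h : a ^ 2 - dPoly * b ^ 2 = 0) : a = 0 ∧ b = 0 := by
  have hb : b = 0 := by
    by_contra hb
    have := norm_natDegree a b hb
    simp [h] at this
  subst hb
  exact ⟨by simpa using h, rfl⟩

/-! ### Pairs `(u, v)` of small degree -/

/-- The two hypotheses say that the coefficients of the remainder of `(r x + s)² - d` modulo
`x² + p x + q` vanish. -/
lemma quad_check : ∀ p q r s : ZMod 3,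
    r ^ 2 * (-p) + 2 * r * s - (2 * (q ^ 2 - 3 * p ^ 2 * q + p ^ 4) + (2 * p * q - p ^ 3)
      + (p ^ 2 - q) + 1) = 0 →
    r ^ 2 * (-q) + s ^ 2 - (2 * (p ^ 3 * q - 2 * p * q ^ 2) + (q ^ 2 - p ^ 2 * q) + p * q) = 0 →
    p = 1 ∧ q = 0 ∧ r = 0 ∧ s = 0 := by decide

/-- The hypothesis says that `-c`, the root of `x + c`, is a root of `s² - d`. -/
lemma lin_check : ∀ c s : ZMod 3,
    s ^ 2 - 2 * (-c) * (-c + 1) * ((-c) ^ 3 + (-c) ^ 2 + (-c) + 2) = 0 →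
    (c = 0 ∨ c = 1) ∧ s = 0 := by decide

lemma quad_case (p q r s : ZMod 3)
    (h : (X ^ 2 + C p * X + C q : (ZMod 3)[X]) ∣ (C r * X + C s) ^ 2 - dPoly) :
    p = 1 ∧ q = 0 ∧ r = 0 ∧ s = 0 := by
  set R1 : ZMod 3 := r ^ 2 * (-p) + 2 * r * s - (2 * (q ^ 2 - 3 * p ^ 2 * q + p ^ 4)
    + (2 * p * q - p ^ 3) + (p ^ 2 - q) + 1) with hR1
  set R0 : ZMod 3 := r ^ 2 * (-q) + s ^ 2 - (2 * (p ^ 3 * q - 2 * p * q ^ 2)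
    + (q ^ 2 - p ^ 2 * q) + p * q) with hR0
  have hdeg : (X ^ 2 + C p * X + C q : (ZMod 3)[X]).degree = 2 := by
    compute_degree!
  -- Explicit division with remainder by `X ^ 2 + C p * X + C q`.
  have key : (C r * X + C s) ^ 2 - dPoly = (X ^ 2 + C p * X + C q) *
      (C r ^ 2 - (2 * (X ^ 3 + C (-p) * X ^ 2 + C (p ^ 2 - q) * X + C (2 * p * q - p ^ 3))
        + (X ^ 2 + C (-p) * X + C (p ^ 2 - q)) + (X + C (-p)))) + (C R1 * X + C R0) := by
    rw [hR1, hR0, dPoly]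
    simp only [map_add, map_sub, map_mul, map_pow, map_neg, map_one, map_ofNat]
    linear_combination (-X ^ 4 - X ^ 3 - 2 * X ^ 2 - X) * three_eq_zero
  rw [key] at h
  have h' := (dvd_add_right (dvd_mul_right _ _)).mp h
  have h0 : (C R1 * X + C R0 : (ZMod 3)[X]) = 0 := by
    refine eq_zero_of_dvd_of_degree_lt h' ?_
    rw [hdeg]
    exact degree_linear_le.trans_lt (by norm_num)
  have e1 : R1 = 0 := by simpa using congrArg (fun t => coeff t 1) h0
  have e0 : R0 = 0 := by simpa using congrArg (fun t => coeff t 0) h0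
  exact quad_check p q r s e1 e0

/-- The reduced Mumford pairs `(u, v)`, which correspond to the
`𝔽₃`-points of the Jacobian. -/
lemma small_cases (u v : (ZMod 3)[X]) (hu : u.Monic) (hd : u.natDegree ≤ 2)
    (hv : v.degree < u.degree) (h : u ∣ v ^ 2 - dPoly) :
    v = 0 ∧ (u = 1 ∨ u = X ∨ u = X + 1 ∨ u = X * (X + 1)) := by
  have hud := degree_eq_natDegree hu.ne_zero
  interval_cases hn : u.natDegree
  · have h1 : u = 1 := hu.natDegree_eq_zero.mp hn
    subst h1
    refine ⟨?_, Or.inl rfl⟩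
    rw [← degree_eq_bot]
    simpa using hv
  · have h1 : u = X + C (u.coeff 0) := hu.eq_X_add_C hn
    have h2 : v = C (v.coeff 0) := by
      refine eq_C_of_natDegree_eq_zero ?_
      by_contra h0
      have := natDegree_lt_natDegree (fun h => h0 (by simp [h])) hv
      omega
    obtain ⟨c, hc⟩ : ∃ c, c = u.coeff 0 := ⟨_, rfl⟩
    obtain ⟨s, hs⟩ : ∃ s, s = v.coeff 0 := ⟨_, rfl⟩
    rw [← hc] at h1
    rw [← hs] at h2
    have h3 : eval (-c) (v ^ 2 - dPoly) = 0 := by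
      refine eval_eq_zero_of_dvd_of_eval_eq_zero h ?_
      simp [h1]
    rw [h2, dPoly] at h3
    simp only [eval_sub, eval_mul, eval_pow, eval_C, eval_add, eval_X, eval_one,
      eval_ofNat] at h3
    obtain ⟨h4, h5⟩ := lin_check c s h3
    refine ⟨by rw [h2, h5, map_zero], ?_⟩
    rcases h4 with h4 | h4
    · right; left; rw [h1, h4, map_zero, add_zero]
    · right; right; left; rw [h1, h4, map_one]
  · have h1 : u = X ^ 2 + C (u.coeff 1) * X + C (u.coeff 0) := by
      have h0 : u.coeff 2 = 1 := by simpa [Monic, leadingCoeff, hn] using hu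
      conv_lhs => rw [u.as_sum_range_C_mul_X_pow, hn]
      simp [Finset.sum_range_succ, h0]
      ring
    have h2 : v = C (v.coeff 1) * X + C (v.coeff 0) := by
      refine eq_X_add_C_of_natDegree_le_one ?_
      by_contra h0
      have := natDegree_lt_natDegree (fun h => h0 (by simp [h])) hv
      omega
    rw [h1, h2] at h
    obtain ⟨e1, e2, e3, e4⟩ := quad_case _ _ _ _ h
    refine ⟨by rw [h2, e3, e4]; simp, ?_⟩
    right; right; right
    rw [h1, e1, e2]; simp; ring

/-! ### Mumford representation of ideals and reduction -/

variable {O : Type*} [CommRing O]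

/-- `O` is the order `A ⊕ A y` over `A = 𝔽₃[x]`, with `y² = d`. Directness of the sum is not part of
the definition: it follows from the other fields by `IsQuadraticOrder.eq_zero`. -/
structure IsQuadraticOrder (ι : (ZMod 3)[X] →+* O) (y : O) : Prop where
  injective : Function.Injective ι
  sq : y ^ 2 = ι dPoly
  exists_rep : ∀ z, ∃ a b, z = ι a + ι b * y

/-- The ideal `(u, v + y)` attached to a pair `(u, v)` of polynomials. -/
def mumford (ι : (ZMod 3)[X] →+* O) (y : O) (u v : (ZMod 3)[X]) : Ideal O :=
  Ideal.span {ι u, ι v + y}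

/-- Equality of ideal classes; stated for all ideals, so that no proof of being nonzero has to be
carried along. -/
def Equivalent (I J : Ideal O) : Prop :=
  ∃ s t : O, s ≠ 0 ∧ t ≠ 0 ∧ Ideal.span {s} * I = Ideal.span {t} * J

lemma Equivalent.trans [IsDomain O] {I J K : Ideal O} (h₁ : Equivalent I J)
    (h₂ : Equivalent J K) : Equivalent I K := by
  obtain ⟨s, t, hs, ht, h⟩ := h₁
  obtain ⟨s', t', hs', ht', h'⟩ := h₂
  refine ⟨s' * s, t * t', mul_ne_zero hs' hs, mul_ne_zero ht ht', ?_⟩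
  rw [← Ideal.span_singleton_mul_span_singleton, ← Ideal.span_singleton_mul_span_singleton,
    mul_assoc, h, mul_assoc, ← h', mul_left_comm]

lemma span_singleton_mul_span_pair (s a b : O) :
    Ideal.span {s} * Ideal.span {a, b} = Ideal.span {s * a, s * b} := by
  rw [Ideal.span_mul_span', Set.singleton_mul, Set.image_pair]

namespace IsQuadraticOrder

variable {ι : (ZMod 3)[X] →+* O} {y : O} (H : IsQuadraticOrder ι y)
include H

lemma eq_zero {a b : (ZMod 3)[X]} (h : ι a + ι b * y = 0) : a = 0 ∧ b = 0 := by
  refine norm_ne_zero a b (H.injective ?_)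
  simp only [map_sub, map_mul, map_pow, map_zero]
  linear_combination (ι a - ι b * y) * h + ι b ^ 2 * H.sq

lemma coords_eq {a b a' b' : (ZMod 3)[X]} (h : ι a + ι b * y = ι a' + ι b' * y) :
    a = a' ∧ b = b' := by
  have := H.eq_zero (a := a - a') (b := b - b') (by simp only [map_sub]; linear_combination h)
  exact ⟨sub_eq_zero.mp this.1, sub_eq_zero.mp this.2⟩

/-- With `e` a generator of the ideal of all `y`-coordinates of elements of `I`, and `e u` a generator
of `I ∩ A`, some `e (v + y)` lies in `I`, and `I = e (u, v + y)`. -/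
lemma exists_mumford [IsDomain O] (I : Ideal O) (hI : I ≠ ⊥) :
    ∃ u v : (ZMod 3)[X], u ≠ 0 ∧ u ∣ v ^ 2 - dPoly ∧ Equivalent I (mumford ι y u v) := by
  -- The ideal of `y`-coordinates of elements of `I`.
  let B : Ideal (ZMod 3)[X] :=
    { carrier := {b | ∃ a, ι a + ι b * y ∈ I}
      add_mem' := by
        rintro b b' ⟨a, h⟩ ⟨a', h'⟩
        refine ⟨a + a', ?_⟩
        convert! I.add_mem h h' using 1
        simp only [map_add]; ring
      zero_mem' := ⟨0, by simp⟩
      smul_mem' := by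
        rintro c b ⟨a, h⟩
        refine ⟨c * a, ?_⟩
        convert! I.mul_mem_left (ι c) h using 1
        simp only [map_mul, smul_eq_mul]; ring }
  have hB : ∀ b, b ∈ B ↔ ∃ a, ι a + ι b * y ∈ I := fun b => Iff.rfl
  obtain ⟨e, he⟩ := (IsPrincipalIdealRing.principal B).principal
  obtain ⟨w, hw⟩ := (IsPrincipalIdealRing.principal (I.comap ι)).principal
  have hB' : ∀ b, b ∈ B ↔ e ∣ b := fun b => by
    rw [he]; exact Ideal.mem_span_singleton
  have hJ : ∀ a, ι a ∈ I ↔ w ∣ a := fun a => by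
    rw [← Ideal.mem_comap, hw]; exact Ideal.mem_span_singleton
  -- `I ∩ A` contains the norms of the elements of `I`.
  have hw0 : w ≠ 0 := by
    obtain ⟨z, hz, hz0⟩ := Submodule.exists_mem_ne_zero_of_ne_bot hI
    obtain ⟨a, b, rfl⟩ := H.exists_rep z
    have h1 : ι (a ^ 2 - dPoly * b ^ 2) ∈ I := by
      convert! I.mul_mem_left (ι a - ι b * y) hz using 1
      simp only [map_sub, map_mul, map_pow]
      linear_combination ι b ^ 2 * H.sq
    rw [hJ] at h1
    rintro rfl
    obtain ⟨rfl, rfl⟩ := norm_ne_zero a b (zero_dvd_iff.mp h1)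
    simp at hz0
  -- Because `w * y ∈ I`.
  obtain ⟨u, rfl⟩ : e ∣ w := by
    rw [← hB', hB]
    refine ⟨0, ?_⟩
    rw [map_zero, zero_add]
    exact I.mul_mem_right _ ((hJ w).mpr dvd_rfl)
  have he0 : e ≠ 0 := left_ne_zero_of_mul hw0
  obtain ⟨a, ha⟩ := (hB e).mp ((hB' e).mpr dvd_rfl)
  -- Because `y * (a + e * y) = e * d + a * y ∈ I`.
  obtain ⟨v, rfl⟩ : e ∣ a := by
    rw [← hB', hB]
    refine ⟨e * dPoly, ?_⟩
    convert! I.mul_mem_left y ha using 1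
    simp only [map_mul]
    linear_combination -ι e * H.sq
  refine ⟨u, v, right_ne_zero_of_mul hw0, ?_, 1, ι e, one_ne_zero, ?_, ?_⟩
  · have h1 : ι (e * (v ^ 2 - dPoly)) ∈ I := by
      convert! I.mul_mem_left (ι v - y) ha using 1
      simp only [map_sub, map_mul, map_pow]
      linear_combination ι e * H.sq
    rw [hJ] at h1
    exact (mul_dvd_mul_iff_left he0).mp h1
  · rwa [Ne, map_eq_zero_iff ι H.injective]
  · rw [mumford, Ideal.span_singleton_one, Ideal.one_eq_top.symm, one_mul]
    apply le_antisymm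
    · intro z hz
      obtain ⟨a, b, rfl⟩ := H.exists_rep z
      obtain ⟨b', rfl⟩ := (hB' b).mp ((hB b).mpr ⟨a, hz⟩)
      have h1 : ι (a - b' * (e * v)) ∈ I := by
        convert! I.sub_mem hz (I.mul_mem_left (ι b') ha) using 1
        simp only [map_sub, map_mul]; ring
      obtain ⟨c, hc⟩ := (hJ _).mp h1
      rw [Ideal.mem_span_singleton_mul]
      refine ⟨ι c * ι u + ι b' * (ι v + y), Ideal.mem_span_pair.mpr ⟨_, _, rfl⟩, ?_⟩
      have hc' := congrArg ι hc
      simp only [map_sub, map_mul] at hc' ⊢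
      linear_combination -hc'
    · rw [Ideal.span_singleton_mul_le_iff]
      intro z hz
      obtain ⟨s, t, rfl⟩ := Ideal.mem_span_pair.mp hz
      have h1 := (hJ _).mpr (dvd_refl (e * u))
      convert! I.add_mem (I.mul_mem_left s h1) (I.mul_mem_left t ha) using 1
      simp only [map_mul]; ring

omit H in
lemma mumford_mod (u v : (ZMod 3)[X]) : mumford ι y u (v % u) = mumford ι y u v := by
  have h := congrArg ι (EuclideanDomain.mod_add_div v u)
  simp only [map_add, map_mul] at h
  apply le_antisymm <;> refine Ideal.span_le.mpr ?_ <;> rintro z (rfl | rfl) <;>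
    refine Ideal.mem_span_pair.mpr ?_
  · exact ⟨1, 0, by ring⟩
  · exact ⟨-ι (v / u), 1, by linear_combination -h⟩
  · exact ⟨1, 0, by ring⟩
  · exact ⟨ι (v / u), 1, by linear_combination h⟩

/-- The reduction step: `(y - v) (u, v + y) = u (u', -v + y)`. -/
lemma mumford_flip {u u' v : (ZMod 3)[X]} (hu : u ≠ 0) (h : v ^ 2 - dPoly = u * u') :
    Equivalent (mumford ι y u v) (mumford ι y u' (-v)) := by
  refine ⟨y - ι v, ι u, ?_, ?_, ?_⟩
  · intro h0
    have := H.eq_zero (a := -v) (b := 1) (by rw [map_neg, map_one]; linear_combination h0)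
    exact one_ne_zero this.2
  · rwa [Ne, map_eq_zero_iff ι H.injective]
  · have h' := congrArg ι h
    simp only [map_sub, map_pow, map_mul] at h'
    have e : (y - ι v) * (ι v + y) = -(ι u * ι u') := by linear_combination H.sq - h'
    rw [mumford, mumford, span_singleton_mul_span_pair, span_singleton_mul_span_pair, e]
    apply le_antisymm <;> refine Ideal.span_le.mpr ?_ <;> rintro z (rfl | rfl) <;>
      refine Ideal.mem_span_pair.mpr ?_
    · exact ⟨0, 1, by rw [map_neg]; ring⟩
    · exact ⟨-1, 0, by ring⟩
    · exact ⟨0, -1, by ring⟩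
    · exact ⟨1, 0, by rw [map_neg]; ring⟩

/-- Repeated reduction lowers the degree of `u` to at most the genus `2`, where `small_cases`
applies. -/
lemma reduce [IsDomain O] (n : ℕ) : ∀ u v : (ZMod 3)[X], u.natDegree ≤ n → u ≠ 0 → u ∣ v ^ 2 - dPoly →
    ∃ w : (ZMod 3)[X], (w = 1 ∨ w = X ∨ w = X + 1 ∨ w = X * (X + 1)) ∧
      Equivalent (mumford ι y u v) (mumford ι y w 0) := by
  have hO : Nontrivial O := H.injective.nontrivial
  induction n using Nat.strong_induction_on with
  | _ n ih =>
  intro u v hn hu0 hdvd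
  rw [← mumford_mod]
  have hdvd' : u ∣ (v % u) ^ 2 - dPoly := by
    have h := EuclideanDomain.mod_add_div v u
    have : (v % u) ^ 2 - dPoly = v ^ 2 - dPoly - u * (v / u * (v + v % u)) := by
      linear_combination (v + v % u) * h
    rw [this]
    exact dvd_sub hdvd (dvd_mul_right _ _)
  have hlt : (v % u).degree < u.degree := EuclideanDomain.mod_lt v hu0
  generalize v % u = v at hdvd' hlt
  by_cases hsmall : u.natDegree ≤ 2
  · have hm := monic_mul_leadingCoeff_inv hu0
    have hl : u.leadingCoeff ≠ 0 := leadingCoeff_ne_zero.mpr hu0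
    have hl' : u.leadingCoeff⁻¹ ≠ 0 := inv_ne_zero hl
    obtain ⟨rfl, hw⟩ := small_cases (u * C u.leadingCoeff⁻¹) v hm
      (by rwa [natDegree_mul_C hl']) (by rwa [degree_mul_C hl'])
      (((isUnit_C.mpr hl'.isUnit).mul_right_dvd).mpr hdvd')
    refine ⟨_, hw, 1, 1, one_ne_zero, one_ne_zero, ?_⟩
    congr 1
    have e : ι (u * C u.leadingCoeff⁻¹) * ι (C u.leadingCoeff) = ι u := by
      rw [← map_mul, mul_assoc, ← C_mul, inv_mul_cancel₀ hl, C_1, mul_one]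
    apply le_antisymm <;> refine Ideal.span_le.mpr ?_ <;> rintro z (rfl | rfl) <;>
      refine Ideal.mem_span_pair.mpr ?_
    · exact ⟨ι (C u.leadingCoeff), 0, by linear_combination e⟩
    · exact ⟨0, 1, by ring⟩
    · exact ⟨ι (C u.leadingCoeff⁻¹), 0, by rw [map_mul]; ring⟩
    · exact ⟨0, 1, by ring⟩
  · obtain ⟨u', hu'⟩ := hdvd'
    have hne : v ^ 2 - dPoly ≠ 0 := fun h => by
      have := norm_ne_zero v 1 (by rw [one_pow, mul_one, h])
      exact one_ne_zero this.2
    have hune : u' ≠ 0 := by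
      rintro rfl
      exact hne (by rw [hu', mul_zero])
    have hdeg : u.natDegree + u'.natDegree = (v ^ 2 - dPoly).natDegree := by
      rw [hu', natDegree_mul hu0 hune]
    have hle := natDegree_sub_le (v ^ 2) dPoly
    rw [natDegree_pow, dPoly_natDegree] at hle
    have hv : v.natDegree < u.natDegree := by
      by_cases h0 : v = 0
      · subst h0; simp; omega
      · exact natDegree_lt_natDegree h0 hlt
    obtain ⟨w, hw, h⟩ := ih u'.natDegree (by omega) u' (-v) le_rfl hune
      ⟨u, by rw [neg_sq, hu', mul_comm]⟩
    exact ⟨w, hw, (H.mumford_flip hu0 hu').trans h⟩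

/-! ### The four ideals `(u, y)` -/

lemma not_isPrincipal {u w : (ZMod 3)[X]} (hd : dPoly = u * w) (hc : IsCoprime u w)
    (h1 : 0 < u.natDegree) (h2 : u.natDegree ≤ 2) : ¬ (mumford ι y u 0).IsPrincipal := by
  rintro ⟨α, hα⟩
  have hu0 : u ≠ 0 := by rintro rfl; simp at h1
  have hα' : mumford ι y u 0 = Ideal.span {α} := hα
  obtain ⟨β, hβ⟩ : α ∣ ι u := by
    rw [← Ideal.mem_span_singleton, ← hα']
    exact Ideal.subset_span (Or.inl rfl)
  obtain ⟨γ, hγ⟩ : α ∣ y := by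
    rw [← Ideal.mem_span_singleton, ← hα']
    exact Ideal.subset_span (Or.inr (by simp))
  obtain ⟨a, b, rfl⟩ := H.exists_rep α
  obtain ⟨a', b', rfl⟩ := H.exists_rep β
  obtain ⟨a'', b'', rfl⟩ := H.exists_rep γ
  -- Comparison of coordinates shows that the norm of `α` divides those of `ι u` and of `y`.
  have e1 := H.coords_eq (a := u) (b := 0) (a' := a * a' + dPoly * b * b') (b' := a * b' + a' * b) (by
    simp only [map_add, map_mul, map_zero]
    linear_combination hβ + ι b * ι b' * H.sq)
  have e2 := H.coords_eq (a := 0) (b := 1) (a' := a * a'' + dPoly * b * b'')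
    (b' := a * b'' + a'' * b) (by
    simp only [map_add, map_mul, map_zero, map_one]
    linear_combination hγ + ι b * ι b'' * H.sq)
  have n1 : a ^ 2 - dPoly * b ^ 2 ∣ u ^ 2 :=
    ⟨a' ^ 2 - dPoly * b' ^ 2, by
      linear_combination (u + a * a' + dPoly * b * b') * e1.1
        - dPoly * (a * b' + a' * b) * e1.2⟩
  have n2 : a ^ 2 - dPoly * b ^ 2 ∣ u * w :=
    ⟨-(a'' ^ 2 - dPoly * b'' ^ 2), by
      linear_combination -(a * a'' + dPoly * b * b'') * e2.1
        + dPoly * (1 + a * b'' + a'' * b) * e2.2 - hd⟩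
  have n3 : a ^ 2 - dPoly * b ^ 2 ∣ u := by
    obtain ⟨s, t, hst⟩ := hc
    have : u = s * u ^ 2 + t * (u * w) := by linear_combination -u * hst
    rw [this]
    exact dvd_add (n1.mul_left s) (n2.mul_left t)
  have hb : b = 0 := by
    by_contra hb
    have h3 := norm_natDegree a b hb
    have h4 := natDegree_le_of_dvd n3 hu0
    omega
  subst hb
  have ha : IsUnit a := dPoly_squarefree a (by
    rw [hd]
    refine Dvd.dvd.mul_right ?_ w
    convert! n3 using 1
    ring)
  -- A representation of `1` as an element of `(u, y)` makes `u` a unit.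
  have htop : (1 : O) ∈ mumford ι y u 0 := by
    have : mumford ι y u 0 = ⊤ := by
      rw [hα', Ideal.span_singleton_eq_top]
      simpa using ha.map ι
    rw [this]; trivial
  obtain ⟨s, t, hst⟩ := Ideal.mem_span_pair.mp htop
  obtain ⟨s1, s2, rfl⟩ := H.exists_rep s
  obtain ⟨t1, t2, rfl⟩ := H.exists_rep t
  have e3 := H.coords_eq (a := s1 * u + t2 * dPoly) (b := s2 * u + t1) (a' := 1) (b' := 0) (by
    simp only [map_add, map_mul, map_zero, map_one] at hst ⊢
    linear_combination hst - ι t2 * H.sq)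
  have hunit : u ∣ 1 := ⟨s1 + t2 * w, by linear_combination -e3.1 + t2 * hd⟩
  have := natDegree_eq_zero_of_isUnit (isUnit_of_dvd_one hunit)
  omega

lemma mumford_sq {u w : (ZMod 3)[X]} (hd : dPoly = u * w) (hc : IsCoprime u w) :
    mumford ι y u 0 * mumford ι y u 0 = Ideal.span {ι u} := by
  obtain ⟨s, t, hst⟩ := hc
  have hst' := congrArg ι hst
  have hd' := congrArg ι hd
  simp only [map_add, map_mul, map_one] at hst' hd'
  rw [mumford, map_zero, zero_add, Ideal.span_pair_mul_span_pair]
  apply le_antisymm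
  · refine Ideal.span_le.mpr ?_
    rintro z (rfl | rfl | rfl | rfl) <;> refine Ideal.mem_span_singleton.mpr ?_
    · exact ⟨ι u, rfl⟩
    · exact ⟨y, rfl⟩
    · exact ⟨y, mul_comm _ _⟩
    · exact ⟨ι w, by rw [← hd', ← H.sq, pow_two]⟩
  · rw [Ideal.span_singleton_le_iff_mem]
    have h1 : ι u = ι s * (ι u * ι u) + ι t * (y * y) := by
      linear_combination -ι u * hst' - ι t * H.sq - ι t * hd'
    refine (congrArg (· ∈ _) h1).mpr ?_
    refine Ideal.add_mem _ (Ideal.mul_mem_left _ _ (Ideal.subset_span ?_))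
      (Ideal.mul_mem_left _ _ (Ideal.subset_span ?_)) <;> simp

lemma mumford_mul {u u' w : (ZMod 3)[X]} (hd : dPoly = u * u' * w) (hc : IsCoprime u u') :
    mumford ι y u 0 * mumford ι y u' 0 = mumford ι y (u * u') 0 := by
  obtain ⟨s, t, hst⟩ := hc
  have hst' := congrArg ι hst
  have hd' := congrArg ι hd
  simp only [map_add, map_mul, map_one] at hst' hd'
  simp only [mumford, map_zero, zero_add, Ideal.span_pair_mul_span_pair, map_mul]
  apply le_antisymm
  · refine Ideal.span_le.mpr ?_
    rintro z (rfl | rfl | rfl | rfl) <;> refine Ideal.mem_span_pair.mpr ?_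
    · exact ⟨1, 0, by ring⟩
    · exact ⟨0, ι u, by ring⟩
    · exact ⟨0, ι u', by ring⟩
    · exact ⟨0, y, by ring⟩
  · refine Ideal.span_le.mpr ?_
    rintro z (rfl | rfl)
    · exact Ideal.subset_span (by simp)
    · have h1 : z = ι s * (ι u * z) + ι t * (z * ι u') := by linear_combination -z * hst'
      refine (congrArg (· ∈ _) h1).mpr ?_
      refine Ideal.add_mem _ (Ideal.mul_mem_left _ _ (Ideal.subset_span ?_))
        (Ideal.mul_mem_left _ _ (Ideal.subset_span ?_)) <;> simp

end IsQuadraticOrder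

/-! ### The class group of the quadratic order -/

lemma isKleinFour_of_generators {G : Type*} [CommGroup G] {a b : G} (ha : a * a = 1)
    (hb : b * b = 1) (ha1 : a ≠ 1) (hb1 : b ≠ 1) (hab : a * b ≠ 1)
    (h : ∀ c : G, c = 1 ∨ c = a ∨ c = b ∨ c = a * b) : IsKleinFour G := by
  classical
  have hne : a ≠ b := by rintro rfl; exact hab ha
  have hsq : ∀ c : G, c ^ 2 = 1 := by
    intro c
    rw [sq]
    rcases h c with rfl | rfl | rfl | rfl
    · exact mul_one 1
    · exact ha
    · exact hb
    · rw [mul_mul_mul_comm, ha, hb, mul_one]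
  refine ⟨?_, ?_⟩
  · have huniv : (Set.univ : Set G) = (({1, a, b, a * b} : Finset G) : Set G) := by
      ext c; simpa using h c
    rw [← Set.ncard_univ, huniv, Set.ncard_coe_finset]
    rw [Finset.card_insert_of_notMem, Finset.card_insert_of_notMem,
      Finset.card_insert_of_notMem, Finset.card_singleton]
    · simpa using ha1
    · simpa [hne] using hb1
    · simp [ha1.symm, hb1.symm, hab.symm]
  · rcases (Nat.dvd_prime Nat.prime_two).mp (Monoid.exponent_dvd_of_forall_pow_eq_one hsq)
      with h1 | h1
    · exact absurd (by simpa [h1] using Monoid.pow_exponent_eq_one a) ha1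
    · exact h1

lemma IsQuadraticOrder.isKleinFour [IsDedekindDomain O] {ι : (ZMod 3)[X] →+* O} {y : O}
    (H : IsQuadraticOrder ι y) : IsKleinFour (ClassGroup O) := by
  have hmem : ∀ {w : (ZMod 3)[X]}, w ≠ 0 → mumford ι y w 0 ∈ nonZeroDivisors (Ideal O) := by
    intro w hw
    refine mem_nonZeroDivisors_of_ne_zero fun h0 => ?_
    have h1 : ι w ∈ mumford ι y w 0 := Ideal.subset_span (Or.inl rfl)
    rw [h0] at h1
    exact hw ((map_eq_zero_iff ι H.injective).mp h1)
  have hX : (X : (ZMod 3)[X]) ≠ 0 := X_ne_zero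
  have hX1 : (X + 1 : (ZMod 3)[X]) ≠ 0 := X_add_C_ne_zero 1
  have dX : dPoly = X * (2 * (X + 1) * (X ^ 3 + X ^ 2 + X + 2)) := by rw [dPoly]; ring
  have dX1 : dPoly = (X + 1) * (2 * X * (X ^ 3 + X ^ 2 + X + 2)) := by rw [dPoly]; ring
  have dXX1 : dPoly = X * (X + 1) * (2 * (X ^ 3 + X ^ 2 + X + 2)) := by rw [dPoly]; ring
  have cX : IsCoprime (X : (ZMod 3)[X]) (2 * (X + 1) * (X ^ 3 + X ^ 2 + X + 2)) :=
    ⟨2 * X + 2 * X ^ 2 + X ^ 3, 1, by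
      linear_combination (1 + 2 * X + 2 * X ^ 2 + 2 * X ^ 3 + X ^ 4) * three_eq_zero⟩
  have cX1 : IsCoprime (X + 1 : (ZMod 3)[X]) (2 * X * (X ^ 3 + X ^ 2 + X + 2)) :=
    ⟨1 + X + X ^ 3, 1, by
      linear_combination (2 * X + X ^ 2 + X ^ 3 + X ^ 4) * three_eq_zero⟩
  have cXX1 : IsCoprime (X * (X + 1) : (ZMod 3)[X]) (2 * (X ^ 3 + X ^ 2 + X + 2)) :=
    ⟨2 + X + 2 * X ^ 2, 1 + 2 * X, by
      linear_combination (1 + 4 * X + 3 * X ^ 2 + 3 * X ^ 3 + 2 * X ^ 4) * three_eq_zero⟩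
  have hdX1 : (X + 1 : (ZMod 3)[X]).natDegree = 1 := natDegree_X_add_C 1
  have hdXX1 : (X * (X + 1) : (ZMod 3)[X]).natDegree = 2 := by
    rw [natDegree_mul hX hX1, natDegree_X, hdX1]
  have hprod : ClassGroup.mk0 ⟨_, hmem hX⟩ * ClassGroup.mk0 ⟨_, hmem hX1⟩
      = ClassGroup.mk0 ⟨_, hmem (mul_ne_zero hX hX1)⟩ := by
    rw [← map_mul]
    congr 1
    exact Subtype.ext (H.mumford_mul dXX1 ⟨-1, 1, by ring⟩)
  refine isKleinFour_of_generators (a := ClassGroup.mk0 ⟨_, hmem hX⟩)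
    (b := ClassGroup.mk0 ⟨_, hmem hX1⟩) ?_ ?_ ?_ ?_ ?_ ?_
  · rw [← map_mul, MulMemClass.mk_mul_mk, ClassGroup.mk0_eq_one_iff, H.mumford_sq dX cX]
    exact ⟨_, rfl⟩
  · rw [← map_mul, MulMemClass.mk_mul_mk, ClassGroup.mk0_eq_one_iff, H.mumford_sq dX1 cX1]
    exact ⟨_, rfl⟩
  · rw [Ne, ClassGroup.mk0_eq_one_iff]
    exact H.not_isPrincipal dX cX (by simp) (by simp)
  · rw [Ne, ClassGroup.mk0_eq_one_iff]
    exact H.not_isPrincipal dX1 cX1 (by simp [hdX1]) (by simp [hdX1])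
  · rw [hprod, Ne, ClassGroup.mk0_eq_one_iff]
    exact H.not_isPrincipal dXX1 cXX1 (by simp [hdXX1]) (by simp [hdXX1])
  · intro c
    obtain ⟨⟨I, hI⟩, rfl⟩ := ClassGroup.mk0_surjective c
    obtain ⟨u, v, hu, hdvd, h1⟩ := H.exists_mumford I (nonZeroDivisors.ne_zero hI)
    obtain ⟨w, hw, h2⟩ := H.reduce _ u v le_rfl hu hdvd
    have hw0 : w ≠ 0 := by
      rcases hw with rfl | rfl | rfl | rfl
      · exact one_ne_zero
      · exact hX
      · exact hX1
      · exact mul_ne_zero hX hX1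
    have key : ClassGroup.mk0 ⟨I, hI⟩ = ClassGroup.mk0 ⟨_, hmem hw0⟩ := by
      obtain ⟨s, t, hs, ht, h⟩ := h1.trans h2
      exact ClassGroup.mk0_eq_mk0_iff.mpr ⟨s, t, hs, ht, h⟩
    rw [hprod, key]
    rcases hw with rfl | rfl | rfl | rfl
    · left
      rw [ClassGroup.mk0_eq_one_iff]
      refine ⟨1, le_antisymm (by simp) ?_⟩
      refine Ideal.span_le.mpr ?_
      rintro z rfl
      exact Ideal.subset_span (by simp)
    · right; left; rfl
    · right; right; left; rfl
    · right; right; right; rfl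

/-! ### The integral closure of `𝔽₃[x]` in `K` -/

section Concrete

lemma algebraMap_dPoly : algebraMap (ZMod 3)[X] (RatFunc (ZMod 3)) dPoly =
    2 * RatFunc.X * (RatFunc.X + 1) * (RatFunc.X ^ 3 + RatFunc.X ^ 2 + RatFunc.X + 2) := by
  simp only [dPoly, map_mul, map_add, map_pow, map_one, map_ofNat, RatFunc.algebraMap_X]

lemma exists_rep_adjoinRoot {K : Type*} [Field K] {e : K} {f : K[X]} (hf : f = X ^ 2 - C e)
    (z : AdjoinRoot f) : ∃ p q, z = AdjoinRoot.of f p + AdjoinRoot.of f q * AdjoinRoot.root f := by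
  have hm : f.Monic := by rw [hf]; exact monic_X_pow_sub_C e two_ne_zero
  obtain ⟨g, rfl⟩ := AdjoinRoot.mk_surjective z
  have hd : f.degree = 2 := by rw [hf]; exact degree_X_pow_sub_C (by norm_num) e
  have hlt := degree_modByMonic_lt g hm
  have hle : (g %ₘ f).degree ≤ 1 := by
    rw [hd] at hlt
    exact Order.le_of_lt_succ hlt
  have h1 : AdjoinRoot.mk f g = AdjoinRoot.mk f (g %ₘ f) := by
    rw [AdjoinRoot.mk_eq_mk]
    exact ⟨g /ₘ f, by linear_combination -modByMonic_add_div g f⟩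
  refine ⟨(g %ₘ f).coeff 0, (g %ₘ f).coeff 1, ?_⟩
  rw [h1]
  conv_lhs => rw [eq_X_add_C_of_degree_le_one hle]
  rw [map_add, map_mul, AdjoinRoot.mk_X, AdjoinRoot.mk_C, AdjoinRoot.mk_C, add_comm]


lemma root_sq {K : Type*} [Field K] {e : K} {f : K[X]} (hf : f = X ^ 2 - C e) :
    AdjoinRoot.root f ^ 2 = AdjoinRoot.of f e := by
  have h : AdjoinRoot.mk f (X ^ 2 - C e) = 0 := by rw [← hf, AdjoinRoot.mk_self]
  rw [map_sub, map_pow, AdjoinRoot.mk_X, AdjoinRoot.mk_C] at h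
  exact sub_eq_zero.mp h

lemma isSeparable_adjoinRoot {K : Type*} [Field K] {e : K} {f : K[X]} (hf : f = X ^ 2 - C e)
    (h2 : (2 : K) ≠ 0) (he : e ≠ 0) [Fact (Irreducible f)] :
    Algebra.IsSeparable K (AdjoinRoot f) := by
  have hm : f.Monic := by rw [hf]; exact monic_X_pow_sub_C e two_ne_zero
  have hsep : IsSeparable K (AdjoinRoot.root f) := by
    rw [IsSeparable, AdjoinRoot.minpoly_root hm.ne_zero, hm.leadingCoeff, inv_one, C_1, mul_one,
      hf]
    exact separable_X_pow_sub_C e (by exact_mod_cast h2) he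
  have htop : IntermediateField.adjoin K {AdjoinRoot.root f} = ⊤ := by
    rw [eq_top_iff]
    intro z _
    obtain ⟨p, q, rfl⟩ := exists_rep_adjoinRoot hf z
    exact add_mem (algebraMap_mem _ p)
      (mul_mem (algebraMap_mem _ q) (IntermediateField.mem_adjoin_simple_self K _))
  have h := (IntermediateField.isSeparable_adjoin_simple_iff_isSeparable K _).mpr hsep
  rw [htop] at h
  exact (AlgEquiv.Algebra.isSeparable_iff IntermediateField.topEquiv).mp h

/-- If `z = p + q y` is integral then so is its conjugate, hence so is `p = -(z + σ z)` (as `3 = 0`),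
so `p` is a polynomial; then `q² d = (z - p)²` is a polynomial, and so is `q` since `d` is
squarefree. -/
lemma exists_rep_of_isIntegral {f : (RatFunc (ZMod 3))[X]}
    (hf : f = X ^ 2 - C (algebraMap (ZMod 3)[X] (RatFunc (ZMod 3)) dPoly))
    [Fact (Irreducible f)] (z : AdjoinRoot f) (hz : IsIntegral (ZMod 3)[X] z) :
    ∃ a b : (ZMod 3)[X], z = algebraMap _ _ a + algebraMap _ _ b * AdjoinRoot.root f := by
  obtain ⟨p, q, rfl⟩ := exists_rep_adjoinRoot hf z
  have hr := root_sq hf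
  set r := AdjoinRoot.root f with hrdef
  set δ := algebraMap (ZMod 3)[X] (RatFunc (ZMod 3)) dPoly with hδ
  have h3 : (3 : RatFunc (ZMod 3)) = 0 := by
    have h := congrArg (algebraMap (ZMod 3)[X] (RatFunc (ZMod 3))) three_eq_zero
    rwa [map_ofNat, map_zero] at h
  have h3' : (3 : AdjoinRoot f) = 0 := by
    have h := congrArg (AdjoinRoot.of f) h3
    rwa [map_ofNat, map_zero] at h
  have hinj : Function.Injective (algebraMap (RatFunc (ZMod 3)) (AdjoinRoot f)) :=
    (AdjoinRoot.of f).injective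
  have descend : ∀ x : RatFunc (ZMod 3), IsIntegral (ZMod 3)[X] (AdjoinRoot.of f x) →
      ∃ a, algebraMap (ZMod 3)[X] (RatFunc (ZMod 3)) a = x := fun x hx =>
    IsIntegrallyClosed.isIntegral_iff.mp ((isIntegral_algebraMap_iff hinj).mp hx)
  -- The conjugation `y ↦ -y`.
  let σ : AdjoinRoot f →ₐ[RatFunc (ZMod 3)] AdjoinRoot f :=
    AdjoinRoot.liftAlgHom f (Algebra.ofId _ _) (-r) (by
      refine (congrArg (eval₂ _ (-r)) hf).trans ?_
      rw [eval₂_sub, eval₂_pow, eval₂_X, eval₂_C, neg_sq, hr]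
      exact sub_self _)
  have hσr : σ r = -r := AdjoinRoot.liftAlgHom_root ..
  have hσ : ∀ x, σ (AdjoinRoot.of f x) = AdjoinRoot.of f x := fun x => σ.commutes x
  have hz' := hz.map (σ.restrictScalars (ZMod 3)[X])
  have hp : IsIntegral (ZMod 3)[X] (AdjoinRoot.of f p) := by
    have h := (hz.add hz').neg
    convert! h using 1
    rw [AlgHom.restrictScalars_apply, map_add, map_mul, hσr, hσ, hσ]
    linear_combination AdjoinRoot.of f p * h3'
  obtain ⟨a, rfl⟩ := descend p hp
  have hq := (hz.sub hp).pow 2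
  rw [add_sub_cancel_left, mul_pow, hr, ← map_pow, ← map_mul] at hq
  obtain ⟨m, hm⟩ := descend _ hq
  have hqd : IsIntegral (ZMod 3)[X] (q * δ) := by
    refine IsIntegral.of_pow two_pos ?_
    rw [show (q * δ) ^ 2 = algebraMap (ZMod 3)[X] (RatFunc (ZMod 3)) (dPoly * m) by
      rw [map_mul, hm]; ring]
    exact isIntegral_algebraMap
  obtain ⟨n, hn⟩ := IsIntegrallyClosed.isIntegral_iff.mp hqd
  have hnm : n ^ 2 = dPoly * m := by
    apply IsFractionRing.injective (ZMod 3)[X] (RatFunc (ZMod 3))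
    rw [map_pow, hn, map_mul, hm]; ring
  obtain ⟨b, rfl⟩ := dPoly_squarefree.isRadical 2 n ⟨m, hnm⟩
  have hδ0 : δ ≠ 0 := by
    rw [hδ, Ne, map_eq_zero_iff _ (IsFractionRing.injective (ZMod 3)[X] (RatFunc (ZMod 3)))]
    exact dPoly_ne_zero
  have hb : q = algebraMap (ZMod 3)[X] (RatFunc (ZMod 3)) b := by
    apply mul_right_cancel₀ hδ0
    rw [← hn, map_mul, mul_comm]
  exact ⟨a, b, by rw [hb]; rfl⟩

end Concrete
end HyperellipticClassGroup
end

open HyperellipticClassGroup in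
theorem class_group_statement_14
    (f : Polynomial (RatFunc (ZMod 3)))
    (hf : f = X ^ 2 - C (2 * RatFunc.X * (RatFunc.X + 1) * (RatFunc.X ^ 3 + RatFunc.X ^ 2 + RatFunc.X + 2)))
    [Fact (Irreducible f)] :
    Nat.card (ClassGroup (FunctionField.ringOfIntegers (ZMod 3) (AdjoinRoot f))) = 4 ∧
      (∀ c : ClassGroup (FunctionField.ringOfIntegers (ZMod 3) (AdjoinRoot f)), c ^ 2 = 1) ∧
      Nonempty (ClassGroup (FunctionField.ringOfIntegers (ZMod 3) (AdjoinRoot f)) ≃* Multiplicative (ZMod 2 × ZMod 2)) := by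
  rw [← algebraMap_dPoly] at hf
  have hm : f.Monic := by rw [hf]; exact monic_X_pow_sub_C _ two_ne_zero
  have hδ0 : algebraMap (ZMod 3)[X] (RatFunc (ZMod 3)) dPoly ≠ 0 := by
    rw [Ne, map_eq_zero_iff _ (IsFractionRing.injective (ZMod 3)[X] (RatFunc (ZMod 3)))]
    exact dPoly_ne_zero
  have h2 : (2 : RatFunc (ZMod 3)) ≠ 0 := by
    have h : algebraMap (ZMod 3)[X] (RatFunc (ZMod 3)) (C 2) ≠ 0 := by
      rw [Ne, map_eq_zero_iff _ (IsFractionRing.injective (ZMod 3)[X] (RatFunc (ZMod 3))),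
        C_eq_zero]
      decide
    rwa [show (C 2 : (ZMod 3)[X]) = 2 from rfl, map_ofNat] at h
  have hsep : Algebra.IsSeparable (RatFunc (ZMod 3)) (AdjoinRoot f) :=
    isSeparable_adjoinRoot hf h2 hδ0
  have hfin : FunctionField (ZMod 3) (AdjoinRoot f) := hm.finite_adjoinRoot
  have hroot : IsIntegral (ZMod 3)[X] (AdjoinRoot.root f) := by
    refine IsIntegral.of_pow two_pos ?_
    rw [root_sq hf]
    exact isIntegral_algebraMap (R := (ZMod 3)[X]) (A := AdjoinRoot f) (x := dPoly)
  have H : IsQuadraticOrder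
      (algebraMap (ZMod 3)[X] (FunctionField.ringOfIntegers (ZMod 3) (AdjoinRoot f)))
      ⟨AdjoinRoot.root f, hroot⟩ := by
    refine ⟨FunctionField.ringOfIntegers.algebraMap_injective _ _, Subtype.ext (root_sq hf), ?_⟩
    rintro ⟨z, hz⟩
    obtain ⟨a, b, h⟩ := exists_rep_of_isIntegral hf z hz
    exact ⟨a, b, Subtype.ext h⟩
  have hK := H.isKleinFour
  refine ⟨hK.card_four, fun c => ?_, IsKleinFour.nonempty_mulEquiv⟩
  rw [sq]
  exact IsKleinFour.mul_self c
end

section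
/- Let K = F_3(x)(y) where y satisfies y^2 = 2(x + 2)(x^2 + 1)(x^2 + x + 2) (the polynomial Y^2 − 2(x+2)(x^2+1)(x^2+x+2) is irreducible over F_3(x)). Then the ideal class group Cl(O_K), where O_K is the integral closure of F_3[x] in K, has order 4 and exponent two; that is, Cl(O_K) is isomorphic to (Z/2Z) × (Z/2Z). -/
/-!
Write `A = 𝔽₃[x]` and let `D = 2 (x + 2) (x² + 1) (x² + x + 2)`, a squarefree polynomial of degree 5
(`quintic`). Since `D` is squarefree and `2` is invertible, the integral closure of `A` in `K` is
`A ⊕ A y` (`exists_of_isIntegral`, `isQuad_ringOfIntegers`); everything else takes place in such a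
ring.

* Upper bound. Every nonzero ideal is a scalar multiple of some `(a, b + y)` with `a ∣ b² - D`
  (`IsQuad.exists_standard`). After reducing `b` modulo `a`, write `b² - D = a a'`; then
  `(b - y) (a, b + y) = a (a', -b + y)`, and `deg a' < deg a` as soon as `deg a ≥ 3`. So every class
  contains some `(a, b + y)` with `deg a ≤ 2` (`IsQuad.exists_reduced`), and a finite search over
  the coefficients (`small_monic`) leaves only `(g, y)` with `g` one of `1`, `x + 2`, `x² + 1`,
  `x² + x + 2`.
* Lower bound. Let `p e = D` with `p`, `e` coprime and nonconstant. Then `(p, y)² = (p)`, so the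
  class of `(p, y)` is killed by 2. A generator `p u + v y` of `(p, y)` would make
  `p u² - (D / p) v²` a unit, which is impossible because the two terms have degrees of opposite
  parity (`not_isUnit_of_odd`, `IsQuad.not_isPrincipal`). As `(p, y) (q, y) = (p q, y)` for coprime
  `p`, `q`, the same fact applied to products `p q` shows that the four classes are distinct.

Hence the class group has four elements and exponent two.
-/

open Polynomial

/-! ### The polynomial `D` and its factors -/

/-- The right-hand side of the defining equation, as a polynomial over `𝔽₃`. -/
noncomputable def quintic : (ZMod 3)[X] := 2 * (X + 2) * (X ^ 2 + 1) * (X ^ 2 + X + 2)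

/-- `O` is the free module `𝔽₃[x] ⊕ 𝔽₃[x] y` with `y ^ 2 = quintic`; the inclusion of `𝔽₃[x]` is
recorded as a ring homomorphism `φ`. -/
structure IsQuad {O : Type*} [CommRing O] (φ : (ZMod 3)[X] →+* O) (y : O) : Prop where
  sq : y * y = φ quintic
  ex : ∀ z, ∃ a b, z = φ a + φ b * y
  inj : ∀ a b, φ a + φ b * y = 0 → a = 0 ∧ b = 0

theorem three_eq_zero : (3 : (ZMod 3)[X]) = 0 := by
  have : (3 : ZMod 3) = 0 := rfl
  rw [← map_ofNat C 3, this, map_zero]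

theorem isUnit_two : IsUnit (2 : (ZMod 3)[X]) :=
  IsUnit.of_mul_eq_one 2 (by linear_combination three_eq_zero)

theorem coprime_12 : IsCoprime (X + 2 : (ZMod 3)[X]) (X ^ 2 + 1) :=
  ⟨X + 1, -1, by linear_combination (X : (ZMod 3)[X]) * three_eq_zero⟩

theorem coprime_13 : IsCoprime (X + 2 : (ZMod 3)[X]) (X ^ 2 + X + 2) :=
  ⟨-(X - 1), 1, by linear_combination three_eq_zero⟩

theorem coprime_23 : IsCoprime (X ^ 2 + 1 : (ZMod 3)[X]) (X ^ 2 + X + 2) :=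
  ⟨-X, X - 1, by linear_combination - three_eq_zero⟩

theorem squarefree_quintic : Squarefree quintic := by
  apply Separable.squarefree
  have h1 : (X + 2 : (ZMod 3)[X]).Separable := by
    rw [← map_ofNat C 2]; exact separable_X_add_C 2
  have h2 : (X ^ 2 + 1 : (ZMod 3)[X]).Separable :=
    ⟨1, X, by simp; linear_combination (X : (ZMod 3)[X]) ^ 2 * three_eq_zero⟩
  have h3 : (X ^ 2 + X + 2 : (ZMod 3)[X]).Separable :=
    ⟨1, X - 1, by simp; linear_combination (X : (ZMod 3)[X]) ^ 2 * three_eq_zero⟩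
  have h := (h1.mul h2 coprime_12).mul h3 (coprime_13.mul_left coprime_23)
  have e : quintic = isUnit_two.unit • ((X + 2) * (X ^ 2 + 1) * (X ^ 2 + X + 2)) := by
    rw [Units.smul_def, IsUnit.unit_spec, smul_eq_mul, quintic]; ring
  rw [e, Units.smul_def, smul_eq_mul]
  exact Separable.unit_mul (Units.isUnit _) h

theorem natDegree_quad (m n : ZMod 3) : (X ^ 2 + C m * X + C n : (ZMod 3)[X]).natDegree = 2 := by
  compute_degree!

theorem natDegree_p1 : (X + 2 : (ZMod 3)[X]).natDegree = 1 := by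
  compute_degree!
theorem natDegree_p2 : (X ^ 2 + 1 : (ZMod 3)[X]).natDegree = 2 := by
  compute_degree!
theorem natDegree_p3 : (X ^ 2 + X + 2 : (ZMod 3)[X]).natDegree = 2 := by
  compute_degree!

theorem natDegree_quintic : quintic.natDegree = 5 := by
  have : (2 : ZMod 3) ≠ 0 := by decide
  unfold quintic
  compute_degree!

theorem quintic_ne_zero : quintic ≠ 0 := by
  intro h; have := natDegree_quintic; simp [h] at this

/-- The degrees of `p * u ^ 2` and `e * v ^ 2` have opposite parity, so their leading terms cannot
cancel. -/
theorem not_isUnit_of_odd {p e u v : (ZMod 3)[X]} (hpe : p * e = quintic) (hp : 0 < p.natDegree)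
    (he : 0 < e.natDegree) : ¬ IsUnit (p * u ^ 2 - e * v ^ 2) := by
  intro hu
  have hp0 : p ≠ 0 := by rintro rfl; simp at hp
  have he0 : e ≠ 0 := by rintro rfl; simp at he
  have hdeg : p.natDegree + e.natDegree = 5 := by
    rw [← natDegree_mul hp0 he0, hpe, natDegree_quintic]
  have h0 := natDegree_eq_zero_of_isUnit hu
  have hpu : u ≠ 0 → (p * u ^ 2).natDegree = p.natDegree + 2 * u.natDegree := fun h => by
    rw [natDegree_mul hp0 (pow_ne_zero _ h), natDegree_pow]
  have hev : v ≠ 0 → (e * v ^ 2).natDegree = e.natDegree + 2 * v.natDegree := fun h => by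
    rw [natDegree_mul he0 (pow_ne_zero _ h), natDegree_pow]
  by_cases hu0 : u = 0
  · by_cases hv0 : v = 0
    · simp [hu0, hv0] at hu
    · rw [hu0, zero_pow two_ne_zero, mul_zero, zero_sub, natDegree_neg, hev hv0] at h0
      omega
  · by_cases hv0 : v = 0
    · rw [hv0, zero_pow two_ne_zero, mul_zero, sub_zero, hpu hu0] at h0
      omega
    · have h1 := hpu hu0
      have h2 := hev hv0
      rcases lt_or_gt_of_ne (show (p * u ^ 2).natDegree ≠ (e * v ^ 2).natDegree by omega) with h | h
      · rw [natDegree_sub_eq_right_of_natDegree_lt h] at h0; omega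
      · rw [natDegree_sub_eq_left_of_natDegree_lt h] at h0; omega

/-! ### The ideals `(p, y)` for a divisor `p` of `D` -/

namespace IsQuad

variable {O : Type*} [CommRing O] {φ : (ZMod 3)[X] →+* O} {y : O}

theorem inj' (h : IsQuad φ y) {a b c d : (ZMod 3)[X]} (e : φ a + φ b * y = φ c + φ d * y) :
    a = c ∧ b = d := by
  have := h.inj (a - c) (b - d) (by simp only [map_sub]; linear_combination e)
  exact ⟨sub_eq_zero.1 this.1, sub_eq_zero.1 this.2⟩

theorem phi_inj (h : IsQuad φ y) {a b : (ZMod 3)[X]} (e : φ a = φ b) : a = b :=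
  (h.inj' (a := a) (b := 0) (c := b) (d := 0) (by simp [e])).1

/-- Divisibility of elements implies divisibility of norms, the norm of `u + v y` being
`u ^ 2 - quintic * v ^ 2`. -/
theorem norm_dvd (h : IsQuad φ y) {u v a b : (ZMod 3)[X]}
    (hd : φ u + φ v * y ∣ φ a + φ b * y) :
    u ^ 2 - quintic * v ^ 2 ∣ a ^ 2 - quintic * b ^ 2 := by
  obtain ⟨z, hz⟩ := hd
  obtain ⟨c, d, rfl⟩ := h.ex z
  obtain ⟨rfl, rfl⟩ := h.inj' (a := a) (b := b) (c := u * c + quintic * v * d)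
    (d := u * d + v * c) (by
      simp only [map_add, map_mul]; linear_combination hz + φ v * φ d * h.sq)
  exact ⟨c ^ 2 - quintic * d ^ 2, by ring⟩

/-- The norm of a generator of `(p, y)` divides `p ^ 2` and `quintic`, hence `p`; it is also
`p * (p * u ^ 2 - e * v ^ 2)`, which makes the second factor a unit. -/
theorem not_isPrincipal (h : IsQuad φ y) {p e : (ZMod 3)[X]} (hpe : p * e = quintic)
    (hco : IsCoprime p e) (hp : 0 < p.natDegree) (he : 0 < e.natDegree) :
    ¬ (Ideal.span {φ p, y}).IsPrincipal := by
  rintro ⟨α, hα⟩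
  rw [Ideal.submodule_span_eq] at hα
  obtain ⟨u, v, rfl⟩ := h.ex α
  have h1 : φ u + φ v * y ∣ φ p + φ 0 * y := by
    rw [← Ideal.mem_span_singleton, ← hα]
    simpa using Ideal.subset_span (by simp)
  have h2 : φ u + φ v * y ∣ φ 0 + φ 1 * y := by
    rw [← Ideal.mem_span_singleton, ← hα]
    simpa using Ideal.subset_span (by simp)
  have h3 : φ u + φ v * y ∈ Ideal.span {φ p, y} := by
    rw [hα]; exact Ideal.mem_span_singleton_self _
  obtain ⟨r, s, hrs⟩ := Ideal.mem_span_pair.1 h3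
  obtain ⟨r1, r2, rfl⟩ := h.ex r
  obtain ⟨s1, s2, rfl⟩ := h.ex s
  obtain ⟨hu, -⟩ := h.inj' (a := u) (b := v) (c := p * (r1 + e * s2)) (d := r2 * p + s1) (by
    simp only [map_add, map_mul]
    have := h.sq
    rw [← hpe, map_mul] at this
    linear_combination - hrs + φ s2 * this)
  have n1 := h.norm_dvd h1
  have n2 := h.norm_dvd h2
  obtain ⟨s, t, hst⟩ := hco
  have n3 : u ^ 2 - quintic * v ^ 2 ∣ p * 1 := by
    have := dvd_add (n1.mul_left s) (n2.mul_left (-t))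
    convert this using 1
    rw [← hpe]; linear_combination - p * hst
  have hp0 : p ≠ 0 := by rintro rfl; simp at hp
  refine not_isUnit_of_odd (u := r1 + e * s2) (v := v) hpe hp he ?_
  rw [isUnit_iff_dvd_one]
  apply (mul_dvd_mul_iff_left hp0).1
  convert n3 using 1
  rw [hu, ← hpe]; ring

theorem sq_span (h : IsQuad φ y) {p e : (ZMod 3)[X]} (hpe : p * e = quintic)
    (hco : IsCoprime p e) :
    Ideal.span {φ p, y} * Ideal.span {φ p, y} = Ideal.span {φ p} := by
  obtain ⟨s, t, hst⟩ := hco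
  have hD := h.sq
  rw [← hpe, map_mul] at hD
  have hst' := congrArg φ hst
  simp only [map_add, map_mul, map_one] at hst'
  rw [Ideal.span_pair_mul_span_pair]
  apply le_antisymm
  · rw [Ideal.span_le]
    rintro z (rfl | rfl | rfl | rfl) <;> rw [SetLike.mem_coe, Ideal.mem_span_singleton]
    · exact dvd_mul_right _ _
    · exact dvd_mul_right _ _
    · exact dvd_mul_left _ _
    · rw [hD]; exact dvd_mul_right _ _
  · rw [Ideal.span_singleton_le_iff_mem]
    have : φ p = φ s * (φ p * φ p) + φ t * (y * y) := by
      rw [hD]; linear_combination - φ p * hst'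
    refine (congrArg (· ∈ _) this).mpr (add_mem
      (Ideal.mul_mem_left _ _ (Ideal.subset_span (Or.inl rfl)))
      (Ideal.mul_mem_left _ _ (Ideal.subset_span (Or.inr (Or.inr (Or.inr rfl))))))

theorem mul_span (h : IsQuad φ y) {p q e : (ZMod 3)[X]} (hpe : p * q * e = quintic)
    (hco : IsCoprime p q) :
    Ideal.span {φ p, y} * Ideal.span {φ q, y} = Ideal.span {φ (p * q), y} := by
  obtain ⟨s, t, hst⟩ := hco
  have hD := h.sq
  rw [← hpe, map_mul] at hD
  have hst' := congrArg φ hst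
  simp only [map_add, map_mul, map_one] at hst'
  rw [Ideal.span_pair_mul_span_pair]
  apply le_antisymm
  · rw [Ideal.span_le]
    rintro z (rfl | rfl | rfl | rfl) <;> rw [SetLike.mem_coe]
    · rw [← map_mul]; exact Ideal.subset_span (by simp)
    · exact Ideal.mul_mem_left _ _ (Ideal.subset_span (by simp))
    · exact Ideal.mul_mem_right _ _ (Ideal.subset_span (by simp))
    · exact Ideal.mul_mem_left _ _ (Ideal.subset_span (by simp))
  · rw [Ideal.span_le]
    rintro z (rfl | rfl) <;> rw [SetLike.mem_coe]
    · rw [map_mul]; exact Ideal.subset_span (by simp)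
    · have : z = φ s * (φ p * z) + φ t * (z * φ q) := by
        linear_combination - z * hst'
      refine (congrArg (· ∈ _) this).mpr (add_mem
        (Ideal.mul_mem_left _ _ (Ideal.subset_span (Or.inr (Or.inl rfl))))
        (Ideal.mul_mem_left _ _ (Ideal.subset_span (Or.inr (Or.inr (Or.inl rfl))))))

end IsQuad

/-! ### Reduction of ideals -/

theorem span_singleton_mul_span_pair {O : Type*} [CommRing O] (x a b : O) :
    Ideal.span {x} * Ideal.span {a, b} = Ideal.span {x * a, x * b} := by
  rw [Ideal.span_insert, Ideal.mul_sup, Ideal.span_singleton_mul_span_singleton,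
    Ideal.span_singleton_mul_span_singleton, ← Ideal.span_insert]

/-- The hypothesis says that `s ^ 2 - quintic` vanishes at `-r`. -/
theorem deg_one_cases (r s : ZMod 3)
    (h : s ^ 2 - 2 * (-r + 2) * ((-r) ^ 2 + 1) * ((-r) ^ 2 + -r + 2) = 0) : r = 2 ∧ s = 0 := by
  revert r s; decide

/-- The hypotheses say that the two coefficients of the remainder of `(s x + t) ^ 2 - quintic` modulo
`x ^ 2 + m x + n` vanish. -/
theorem deg_two_cases (m n s t : ZMod 3)
    (hα : 1 + 2 * s * t - m * (1 + s ^ 2 - m * (2 + m ^ 2 - n) + n * m) - n * (2 + m ^ 2 - n) = 0)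
    (hβ : 1 + t ^ 2 - n * (1 + s ^ 2 - m * (2 + m ^ 2 - n) + n * m) = 0) :
    s = 0 ∧ t = 0 ∧ (m = 0 ∧ n = 1 ∨ m = 1 ∧ n = 2) := by
  revert m n s t; decide

/-- The reduced pairs `(a, b)` with `deg a ≤ 2`. -/
theorem small_monic {a b : (ZMod 3)[X]} (ha : a.Monic) (hdeg : a.natDegree ≤ 2)
    (hb : b.degree < a.degree) (hab : a ∣ b ^ 2 - quintic) :
    b = 0 ∧ (a = 1 ∨ a = X + 2 ∨ a = X ^ 2 + 1 ∨ a = X ^ 2 + X + 2) := by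
  have ha0 := ha.ne_zero
  obtain h0 | h1 | h2 : a.natDegree = 0 ∨ a.natDegree = 1 ∨ a.natDegree = 2 := by omega
  · have h1 := ha.natDegree_eq_zero.1 h0
    subst h1
    refine ⟨?_, Or.inl rfl⟩
    by_contra hb0
    have := natDegree_lt_natDegree hb0 hb
    simp at this
  · obtain ⟨r, rfl⟩ : ∃ r, a = X + C r := by
      refine ⟨a.coeff 0, ?_⟩
      conv_lhs => rw [ha.as_sum, h1]
      simp
    obtain ⟨s, rfl⟩ : ∃ s, b = C s := by
      refine ⟨_, eq_C_of_degree_le_zero ?_⟩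
      rw [degree_X_add_C] at hb
      exact Nat.WithBot.lt_one_iff_le_zero.1 hb
    obtain ⟨q, hq⟩ := hab
    have := congrArg (eval (-r)) hq
    simp [quintic] at this
    obtain ⟨rfl, rfl⟩ := deg_one_cases r s (by linear_combination this)
    exact ⟨map_zero C, Or.inr (Or.inl (by rw [map_ofNat]))⟩
  · obtain ⟨m, n, rfl⟩ : ∃ m n, a = X ^ 2 + C m * X + C n := by
      refine ⟨a.coeff 1, a.coeff 0, ?_⟩
      conv_lhs => rw [ha.as_sum, h2]
      simp [Finset.sum_range_succ]; ring
    obtain ⟨s, t, rfl⟩ : ∃ s t, b = C s * X + C t := by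
      refine exists_eq_X_add_C_of_natDegree_le_one ?_
      by_cases hb0 : b = 0
      · simp [hb0]
      · have := natDegree_lt_natDegree hb0 hb
        omega
    -- Division with remainder of `b ^ 2 - quintic` by `a`.
    have hd : X ^ 2 + C m * X + C n ∣
        C (1 + 2 * s * t - m * (1 + s ^ 2 - m * (2 + m ^ 2 - n) + n * m) - n * (2 + m ^ 2 - n)) * X
        + C (1 + t ^ 2 - n * (1 + s ^ 2 - m * (2 + m ^ 2 - n) + n * m)) := by
      have := dvd_sub hab (dvd_mul_right (X ^ 2 + C m * X + C n)
        (X ^ 3 - C m * X ^ 2 + C (2 + m ^ 2 - n) * X +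
          C (1 + s ^ 2 - m * (2 + m ^ 2 - n) + n * m)))
      convert this using 1
      simp only [map_add, map_sub, map_mul, map_pow, map_one, map_ofNat, quintic]
      linear_combination (X ^ 5 + 2 * X ^ 4 + 4 * X ^ 3 + 5 * X ^ 2 + 3 * X + 3 : (ZMod 3)[X])
        * three_eq_zero
    have hz := eq_zero_of_dvd_of_degree_lt hd (by
      refine degree_linear_le.trans_lt ?_
      rw [degree_eq_natDegree ha0, h2]; norm_num)
    have h1 := congrArg (coeff · 1) hz
    have h0 := congrArg (coeff · 0) hz
    simp only [coeff_add, coeff_C_mul, coeff_X_one, coeff_X_zero, coeff_C_zero, coeff_zero,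
      mul_one, mul_zero, zero_add, coeff_C_succ, add_zero] at h0 h1
    obtain ⟨rfl, rfl, h⟩ := deg_two_cases m n s t h1 h0
    refine ⟨by simp, Or.inr (Or.inr ?_)⟩
    rcases h with ⟨rfl, rfl⟩ | ⟨rfl, rfl⟩
    · left; simp
    · right; simp [map_ofNat C 2]

namespace IsQuad

variable {O : Type*} [CommRing O] {φ : (ZMod 3)[X] →+* O} {y : O}

/-- Standard form of an ideal: `c` times the `𝔽₃[x]`-span of `a` and `b + y`, where `a` divides
the norm of `b + y`. -/
theorem exists_standard (h : IsQuad φ y) {I : Ideal O} (hI : I ≠ ⊥) :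
    ∃ c a b, c ≠ 0 ∧ a ≠ 0 ∧ a ∣ b ^ 2 - quintic ∧
      I = Ideal.span {φ c} * Ideal.span {φ a, φ b + y} := by
  have hD := h.sq
  -- `J` is the ideal of all `y`-coordinates of elements of `I`.
  let J : Ideal (ZMod 3)[X] :=
    { carrier := {v | ∃ u, φ u + φ v * y ∈ I}
      zero_mem' := ⟨0, by simp⟩
      add_mem' := by
        rintro v v' ⟨u, hu⟩ ⟨u', hu'⟩
        refine ⟨u + u', ?_⟩
        convert I.add_mem hu hu' using 1
        simp only [map_add]; ring
      smul_mem' := by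
        rintro r v ⟨u, hu⟩
        refine ⟨r * u, ?_⟩
        convert I.mul_mem_left (φ r) hu using 1
        simp only [smul_eq_mul, map_mul]; ring }
  obtain ⟨c, hc⟩ := (IsPrincipalIdealRing.principal J).principal
  obtain ⟨e, he⟩ := (IsPrincipalIdealRing.principal (I.comap φ)).principal
  have hJ : ∀ v, (∃ u, φ u + φ v * y ∈ I) ↔ c ∣ v := fun v => by
    rw [← Ideal.mem_span_singleton, ← Ideal.submodule_span_eq, ← hc]; rfl
  have hE : ∀ u, φ u ∈ I ↔ e ∣ u := fun u => by
    rw [← Ideal.mem_span_singleton, ← Ideal.submodule_span_eq, ← he]; rfl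
  obtain ⟨b', hb'⟩ := (hJ c).2 dvd_rfl
  have heI := (hE e).2 dvd_rfl
  obtain ⟨a, rfl⟩ : c ∣ e := (hJ e).1 ⟨0, by simpa [mul_comm] using I.mul_mem_left y heI⟩
  obtain ⟨b, rfl⟩ : c ∣ b' := (hJ b').1 ⟨c * quintic, by
    convert I.mul_mem_left y hb' using 1
    rw [map_mul]; linear_combination - φ c * hD⟩
  have hac : a ∣ b ^ 2 - quintic ∧ c ≠ 0 ∧ a ≠ 0 := by
    have h1 : c * a ∣ c * (b ^ 2 - quintic) := (hE _).1 (by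
      convert I.mul_mem_left (φ b - y) hb' using 1
      simp only [map_mul, map_sub, map_pow]; linear_combination φ c * hD)
    -- A nonzero element of `I` has nonzero norm, since `quintic` has odd degree.
    have hca : c * a ≠ 0 := by
      intro h0
      obtain ⟨z, hz, hz0⟩ := Submodule.exists_mem_ne_zero_of_ne_bot hI
      obtain ⟨u, v, rfl⟩ := h.ex z
      have hn : φ (u ^ 2 - quintic * v ^ 2) ∈ I := by
        convert I.mul_mem_left (φ u - φ v * y) hz using 1
        simp only [map_mul, map_sub, map_pow]; linear_combination φ v ^ 2 * hD
      rw [hE, h0, zero_dvd_iff] at hn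
      by_cases hv : v = 0
      · subst hv
        have : u = 0 := by simpa using hn
        subst this; simp at hz0
      · have h3 : (quintic * v ^ 2).natDegree = 5 + 2 * v.natDegree := by
          rw [natDegree_mul quintic_ne_zero (pow_ne_zero _ hv), natDegree_quintic, natDegree_pow]
        rw [← sub_eq_zero.1 hn, natDegree_pow] at h3
        omega
    exact ⟨(mul_dvd_mul_iff_left (left_ne_zero_of_mul hca)).1 h1, left_ne_zero_of_mul hca,
      right_ne_zero_of_mul hca⟩
  refine ⟨c, a, b, hac.2.1, hac.2.2, hac.1, ?_⟩
  rw [span_singleton_mul_span_pair]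
  have e1 : φ c * (φ b + y) = φ (c * b) + φ c * y := by rw [map_mul]; ring
  rw [e1, ← map_mul]
  apply le_antisymm
  · intro z hz
    obtain ⟨u, v, rfl⟩ := h.ex z
    obtain ⟨t, rfl⟩ := (hJ v).1 ⟨u, hz⟩
    have h2 : φ (u - t * (c * b)) ∈ I := by
      convert I.sub_mem hz (I.mul_mem_left (φ t) hb') using 1
      simp only [map_mul, map_sub]; ring
    obtain ⟨w, hw⟩ := (hE _).1 h2
    refine Ideal.mem_span_pair.2 ⟨φ w, φ t, ?_⟩
    have := congrArg φ hw
    simp only [map_mul, map_sub] at this ⊢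
    linear_combination - this
  · rw [Ideal.span_le]
    rintro z (rfl | rfl)
    · exact heI
    · exact hb'

/-- Gauss reduction: the ideal `(a, b + y)` is equivalent to `(g, y)` for one of four `g`. -/
theorem exists_reduced [IsDomain O] (h : IsQuad φ y) (n : ℕ) :
    ∀ a b : (ZMod 3)[X], a.natDegree = n → a ≠ 0 →
    a ∣ b ^ 2 - quintic → ∃ g x z, x ≠ 0 ∧ z ≠ 0 ∧
      (g = 1 ∨ g = X + 2 ∨ g = X ^ 2 + 1 ∨ g = X ^ 2 + X + 2) ∧
      Ideal.span {x} * Ideal.span {φ a, φ b + y} = Ideal.span {z} * Ideal.span {φ g, y} := by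
  have hphi : Function.Injective φ := fun _ _ => h.phi_inj
  induction n using Nat.strong_induction_on with
  | _ n ih =>
  intro a b0 hn ha hab0
  -- Replace `b0` by its remainder modulo `a`.
  obtain ⟨b, hb, hab, hspan⟩ : ∃ b : (ZMod 3)[X], b.degree < a.degree ∧ a ∣ b ^ 2 - quintic ∧
      Ideal.span {φ a, φ b0 + y} = Ideal.span {φ a, φ b + y} := by
    have e := EuclideanDomain.div_add_mod b0 a
    refine ⟨b0 % a, degree_mod_lt b0 ha, ?_, ?_⟩
    · have h1 : a ∣ a * (b0 / a) * (b0 + b0 % a) := ⟨_, mul_assoc _ _ _⟩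
      convert dvd_sub hab0 h1 using 1
      linear_combination (b0 + b0 % a) * e
    · have h2 : φ b0 + y = (φ (b0 % a) + y) + φ a * φ (b0 / a) := by
        rw [← map_mul]
        conv_lhs => rw [← e]
        rw [map_add]; ring
      rw [h2, Ideal.span_pair_add_left_mul]
  rw [hspan]
  by_cases hsmall : n ≤ 2
  · have hl : IsUnit (C a.leadingCoeff⁻¹) := isUnit_C.2 (by simpa using ha)
    have hass : Associated a (a * C a.leadingCoeff⁻¹) := ⟨hl.unit, rfl⟩
    have hm : (a * C a.leadingCoeff⁻¹).Monic := monic_mul_leadingCoeff_inv ha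
    obtain ⟨rfl, hg⟩ := small_monic hm
      (by rw [natDegree_mul_leadingCoeff_inv _ ha]; omega)
      (by rwa [degree_mul_leadingCoeff_inv _ ha]) (hass.dvd_iff_dvd_left.1 hab)
    refine ⟨_, 1, 1, one_ne_zero, one_ne_zero, hg, ?_⟩
    congr 1
    rw [map_zero, zero_add, Ideal.span_insert, Ideal.span_insert (φ (a * _))]
    congr 1
    exact Ideal.span_singleton_eq_span_singleton.2 (hass.map φ)
  · obtain ⟨a', ha'⟩ := hab
    have hlt : (b ^ 2).natDegree < 2 * n := by
      by_cases hb0 : b = 0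
      · simp [hb0]; omega
      · have := natDegree_lt_natDegree hb0 hb
        rw [natDegree_pow]; omega
    have hle : (b ^ 2 - quintic).natDegree < 2 * n :=
      (natDegree_sub_le _ _).trans_lt (by rw [natDegree_quintic]; omega)
    have ha'0 : a' ≠ 0 := by
      rintro rfl
      rw [mul_zero, sub_eq_zero] at ha'
      have := natDegree_quintic
      rw [← ha', natDegree_pow] at this
      omega
    rw [ha', natDegree_mul ha ha'0] at hle
    obtain ⟨g, x, z, hx, hz, hg, he⟩ := ih a'.natDegree (by omega) a' (-b) rfl ha'0
      ⟨a, by rw [neg_sq, ha', mul_comm]⟩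
    have hw : φ b - y ≠ 0 := by
      intro h0
      have := (h.inj b (-1) (by rw [map_neg, map_one]; linear_combination h0)).2
      simp at this
    refine ⟨g, x * (φ b - y), z * φ a, mul_ne_zero hx hw,
      mul_ne_zero hz ((map_ne_zero_iff φ hphi).2 ha), hg, ?_⟩
    -- `(b - y) (a, b + y) = a (a', b - y)`, since `(b - y) (b + y) = a a'`.
    have key : Ideal.span {φ b - y} * Ideal.span {φ a, φ b + y}
        = Ideal.span {φ a} * Ideal.span {φ a', φ (-b) + y} := by
      rw [span_singleton_mul_span_pair, span_singleton_mul_span_pair]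
      have e1 : (φ b - y) * (φ b + y) = φ a * φ a' := by
        have := congrArg φ ha'
        simp only [map_sub, map_pow, map_mul] at this
        linear_combination this - h.sq
      have e2 : (φ b - y) * φ a = - (φ a * (φ (-b) + y)) := by
        rw [map_neg]; ring
      rw [e1, e2, Ideal.span_pair_comm, Ideal.span_pair_neg]
    rw [← Ideal.span_singleton_mul_span_singleton, ← Ideal.span_singleton_mul_span_singleton,
      mul_assoc, key, mul_right_comm, ← he]
    ring

end IsQuad

/-! ### The class group -/

namespace IsQuad

variable {O : Type*} [CommRing O] {φ : (ZMod 3)[X] →+* O} {y : O}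

theorem span_mem_nonZeroDivisors [IsDomain O] (h : IsQuad φ y) (g : (ZMod 3)[X]) :
    Ideal.span {φ g, y} ∈ nonZeroDivisors (Ideal O) := by
  rw [mem_nonZeroDivisors_iff_ne_zero]
  intro h0
  have hy : y = 0 := by
    rw [← Ideal.mem_bot, ← Ideal.zero_eq_bot, ← h0]
    exact Ideal.subset_span (by simp)
  have := (h.inj 0 1 (by simp [hy])).2
  exact one_ne_zero this

variable [IsDedekindDomain O]

/-- The class of the ideal `(g, y)`. -/
noncomputable def cl (h : IsQuad φ y) (g : (ZMod 3)[X]) : ClassGroup O :=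
  ClassGroup.mk0 ⟨Ideal.span {φ g, y}, h.span_mem_nonZeroDivisors g⟩

theorem cl_one (h : IsQuad φ y) : h.cl 1 = 1 := by
  rw [cl, ClassGroup.mk0_eq_one_iff, map_one,
    (Ideal.eq_top_iff_one _).2 (Ideal.subset_span (Set.mem_insert 1 {y}))]
  exact top_isPrincipal

theorem cl_ne_one (h : IsQuad φ y) {p e : (ZMod 3)[X]} (hpe : p * e = quintic)
    (hco : IsCoprime p e) (hp : 0 < p.natDegree) (he : 0 < e.natDegree) : h.cl p ≠ 1 := by
  rw [cl, Ne, ClassGroup.mk0_eq_one_iff]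
  exact h.not_isPrincipal hpe hco hp he

theorem cl_sq (h : IsQuad φ y) {p e : (ZMod 3)[X]} (hpe : p * e = quintic)
    (hco : IsCoprime p e) : h.cl p ^ 2 = 1 := by
  rw [pow_two, cl, ← map_mul, MulMemClass.mk_mul_mk, ClassGroup.mk0_eq_one_iff,
    h.sq_span hpe hco]
  exact ⟨_, rfl⟩

theorem cl_mul (h : IsQuad φ y) {p q e : (ZMod 3)[X]} (hpe : p * q * e = quintic)
    (hco : IsCoprime p q) : h.cl p * h.cl q = h.cl (p * q) := by
  rw [cl, cl, ← map_mul, cl]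
  congr 1
  exact Subtype.ext (h.mul_span hpe hco)

/-- If the two classes agreed, the class of `(p * q, y)` would be the square of that of `(p, y)`. -/
theorem cl_ne_cl (h : IsQuad φ y) {p q e : (ZMod 3)[X]} (hpe : p * q * e = quintic)
    (hpq : IsCoprime p q) (hpe' : IsCoprime p e) (hqe : IsCoprime q e)
    (hp : 0 < p.natDegree) (he : 0 < e.natDegree) : h.cl p ≠ h.cl q := by
  intro heq
  have hq0 : q ≠ 0 := by
    rintro rfl; exact quintic_ne_zero (by rw [← hpe]; ring)
  have hp0 : p ≠ 0 := by rintro rfl; simp at hp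
  refine h.cl_ne_one hpe (hpe'.mul_left hqe) ?_ he ?_
  · rw [natDegree_mul hp0 hq0]; omega
  · rw [← h.cl_mul hpe hpq, ← heq, ← pow_two]
    exact h.cl_sq (e := q * e) (by rw [← hpe]; ring) (hpq.mul_right hpe')

theorem cl_cases (h : IsQuad φ y) (c : ClassGroup O) :
    c = 1 ∨ c = h.cl (X + 2) ∨ c = h.cl (X ^ 2 + 1) ∨ c = h.cl (X ^ 2 + X + 2) := by
  obtain ⟨⟨I, hI⟩, rfl⟩ := ClassGroup.mk0_surjective c
  obtain ⟨c, a, b, hc, ha, hab, rfl⟩ := h.exists_standard (mem_nonZeroDivisors_iff_ne_zero.1 hI)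
  obtain ⟨g, x, z, hx, hz, hg, he⟩ := h.exists_reduced _ a b rfl ha hab
  have hφc : φ c ≠ 0 := fun h0 => hc (h.phi_inj (h0.trans (map_zero φ).symm))
  have key : ClassGroup.mk0 ⟨_, hI⟩ = h.cl g := by
    rw [cl, ClassGroup.mk0_eq_mk0_iff]
    refine ⟨x, z * φ c, hx, mul_ne_zero hz hφc, ?_⟩
    rw [← Ideal.span_singleton_mul_span_singleton, mul_left_comm, he]
    ring
  rw [key]
  rcases hg with rfl | rfl | rfl | rfl
  · exact Or.inl h.cl_one
  · exact Or.inr (Or.inl rfl)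
  · exact Or.inr (Or.inr (Or.inl rfl))
  · exact Or.inr (Or.inr (Or.inr rfl))

theorem isKleinFour (h : IsQuad φ y) : IsKleinFour (ClassGroup O) := by
  have u2 (p q : (ZMod 3)[X]) (hpq : IsCoprime p q) : IsCoprime p (2 * q) :=
    (isCoprime_mul_unit_left_right isUnit_two p q).2 hpq
  have d2 {p : (ZMod 3)[X]} (hp : 0 < p.natDegree) : 0 < (2 * p).natDegree := by
    rwa [natDegree_mul isUnit_two.ne_zero (by rintro rfl; simp at hp),
      natDegree_eq_zero_of_isUnit isUnit_two, zero_add]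
  have d1 := natDegree_p1
  have d2' := natDegree_p2
  have d3 := natDegree_p3
  have n12 : h.cl (X + 2) ≠ h.cl (X ^ 2 + 1) :=
    h.cl_ne_cl (e := 2 * (X ^ 2 + X + 2)) (by rw [quintic]; ring) coprime_12
      (u2 _ _ coprime_13) (u2 _ _ coprime_23) (by omega) (d2 (by omega))
  have n13 : h.cl (X + 2) ≠ h.cl (X ^ 2 + X + 2) :=
    h.cl_ne_cl (e := 2 * (X ^ 2 + 1)) (by rw [quintic]; ring) coprime_13
      (u2 _ _ coprime_12) (u2 _ _ coprime_23.symm) (by omega) (d2 (by omega))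
  have n23 : h.cl (X ^ 2 + 1) ≠ h.cl (X ^ 2 + X + 2) :=
    h.cl_ne_cl (e := 2 * (X + 2)) (by rw [quintic]; ring) coprime_23
      (u2 _ _ coprime_12.symm) (u2 _ _ coprime_13.symm) (by omega) (d2 (by omega))
  have hd {p q : (ZMod 3)[X]} (hp : 0 < p.natDegree) (hq : 0 < q.natDegree) :
      0 < (2 * (p * q)).natDegree := by
    refine d2 ?_
    rw [natDegree_mul (by rintro rfl; simp at hp) (by rintro rfl; simp at hq)]
    omega
  have n1 : h.cl (X + 2) ≠ 1 :=
    h.cl_ne_one (e := 2 * ((X ^ 2 + 1) * (X ^ 2 + X + 2))) (by rw [quintic]; ring)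
      (u2 _ _ (coprime_12.mul_right coprime_13)) (by omega) (hd (by omega) (by omega))
  have n2 : h.cl (X ^ 2 + 1) ≠ 1 :=
    h.cl_ne_one (e := 2 * ((X + 2) * (X ^ 2 + X + 2))) (by rw [quintic]; ring)
      (u2 _ _ (coprime_12.symm.mul_right coprime_23)) (by omega) (hd (by omega) (by omega))
  have n3 : h.cl (X ^ 2 + X + 2) ≠ 1 :=
    h.cl_ne_one (e := 2 * ((X + 2) * (X ^ 2 + 1))) (by rw [quintic]; ring)
      (u2 _ _ (coprime_13.symm.mul_right coprime_23.symm)) (by omega) (hd (by omega) (by omega))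
  have s1 : h.cl (X + 2) ^ 2 = 1 :=
    h.cl_sq (e := 2 * ((X ^ 2 + 1) * (X ^ 2 + X + 2))) (by rw [quintic]; ring)
      (u2 _ _ (coprime_12.mul_right coprime_13))
  have s2 : h.cl (X ^ 2 + 1) ^ 2 = 1 :=
    h.cl_sq (e := 2 * ((X + 2) * (X ^ 2 + X + 2))) (by rw [quintic]; ring)
      (u2 _ _ (coprime_12.symm.mul_right coprime_23))
  have s3 : h.cl (X ^ 2 + X + 2) ^ 2 = 1 :=
    h.cl_sq (e := 2 * ((X + 2) * (X ^ 2 + 1))) (by rw [quintic]; ring)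
      (u2 _ _ (coprime_13.symm.mul_right coprime_23.symm))
  have hsq (c : ClassGroup O) : c ^ 2 = 1 := by
    rcases h.cl_cases c with rfl | rfl | rfl | rfl
    exacts [one_pow 2, s1, s2, s3]
  constructor
  · classical
    have huniv : (Set.univ : Set (ClassGroup O)) =
        ({1, h.cl (X + 2), h.cl (X ^ 2 + 1), h.cl (X ^ 2 + X + 2)} : Finset (ClassGroup O)) := by
      ext c; simpa using h.cl_cases c
    rw [← Set.ncard_univ, huniv, Set.ncard_coe_finset]
    exact Finset.card_eq_four.2 ⟨_, _, _, _, n1.symm, n2.symm, n3.symm, n12, n13, n23, rfl⟩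
  · have : Nontrivial (ClassGroup O) := ⟨_, _, n1⟩
    exact (Monoid.exponent_eq_prime_iff Nat.prime_two).2 fun c hc => orderOf_eq_prime (hsq c) hc

end IsQuad

/-! ### The ring of integers -/

/-- The integral elements of a quadratic extension `K = F ⊕ F y` of `F = 𝔽₃(x)` with
`y ^ 2 = quintic` have polynomial coordinates, because `quintic` is squarefree; `σ` is the
nontrivial automorphism. -/
theorem exists_of_isIntegral {F K : Type*} [Field F] [Algebra (ZMod 3)[X] F]
    [IsFractionRing (ZMod 3)[X] F] [Field K] [Algebra (ZMod 3)[X] K] [Algebra F K]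
    [IsScalarTower (ZMod 3)[X] F K] {y : K} {d : F} (hd : d = algebraMap (ZMod 3)[X] F quintic)
    (hy2 : y * y = algebraMap F K d) (σ : K →ₐ[F] K) (hσ : σ y = -y) (u v : F)
    (hz : IsIntegral (ZMod 3)[X] (algebraMap F K u + algebraMap F K v * y)) :
    ∃ a b, algebraMap (ZMod 3)[X] F a = u ∧ algebraMap (ZMod 3)[X] F b = v := by
  have hAF : Function.Injective (algebraMap (ZMod 3)[X] F) := IsFractionRing.injective _ _
  have hFK : Function.Injective (algebraMap F K) := (algebraMap F K).injective
  have htow (a : (ZMod 3)[X]) : algebraMap F K (algebraMap _ F a) = algebraMap _ K a :=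
    (IsScalarTower.algebraMap_apply (ZMod 3)[X] F K a).symm
  have hpoly (u : F) (hu : IsIntegral (ZMod 3)[X] (algebraMap F K u)) :
      ∃ a, algebraMap (ZMod 3)[X] F a = u :=
    IsIntegrallyClosed.isIntegral_iff.1 ((isIntegral_algebraMap_iff hFK).1 hu)
  have hz' := hz.map (σ.restrictScalars (ZMod 3)[X])
  -- The trace `2 u` is integral, hence `u` is a polynomial, as `4 = 1`.
  have h2u : ∃ a, algebraMap (ZMod 3)[X] F a = 2 * u := by
    apply hpoly
    have e : algebraMap F K (2 * u) = (algebraMap F K u + algebraMap F K v * y) +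
        σ.restrictScalars (ZMod 3)[X] (algebraMap F K u + algebraMap F K v * y) := by
      simp only [AlgHom.restrictScalars_apply, map_add, map_mul, hσ, AlgHom.commutes, map_ofNat]
      ring
    rw [e]
    exact hz.add hz'
  obtain ⟨a, ha⟩ := h2u
  have hu : algebraMap (ZMod 3)[X] F (2 * a) = u := by
    have h3 := congrArg (algebraMap (ZMod 3)[X] F) three_eq_zero
    simp only [map_mul, map_ofNat, map_zero] at h3 ⊢
    linear_combination 2 * ha + u * h3
  -- `v y` is then integral, and so is its square `v ^ 2 * d`.
  have hv2 : ∃ m, algebraMap (ZMod 3)[X] F m = v ^ 2 * d := by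
    apply hpoly
    have h4 : IsIntegral (ZMod 3)[X] (algebraMap F K v * y) := by
      have : IsIntegral (ZMod 3)[X] (algebraMap F K u) := by
        rw [← hu, htow]; exact isIntegral_algebraMap
      simpa using hz.sub this
    have e : algebraMap F K (v ^ 2 * d) = algebraMap F K v * y * (algebraMap F K v * y) := by
      simp only [map_mul, map_pow]
      linear_combination - algebraMap F K v ^ 2 * hy2
    rw [e]
    exact h4.mul h4
  obtain ⟨m, hm⟩ := hv2
  -- In lowest terms `v = p / q`, the relation `p ^ 2 * quintic = m * q ^ 2` gives
  -- `q ^ 2 ∣ quintic`, so `q` is a unit.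
  obtain ⟨p, q, hpq, hv⟩ : ∃ p q : (ZMod 3)[X], IsCoprime p q ∧
      v * algebraMap _ F q = algebraMap _ F p ∧ q ≠ 0 :=
    by
      obtain ⟨p, q, hrel, hv⟩ := IsFractionRing.exists_reduced_fraction (A := (ZMod 3)[X]) v
      exact ⟨p, q, hrel.isCoprime, by rw [← hv]; exact IsLocalization.mk'_spec F p q,
        nonZeroDivisors.ne_zero q.2⟩
  have e : p ^ 2 * quintic = m * q ^ 2 := by
    apply hAF
    simp only [map_mul, map_pow]
    rw [hm, ← hv.1, hd]; ring
  have hdvd : q * q ∣ quintic := by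
    rw [← pow_two]
    exact (hpq.symm.pow).dvd_of_dvd_mul_left ⟨m, by rw [e, mul_comm]⟩
  obtain ⟨r, hr⟩ := (squarefree_quintic q hdvd).exists_right_inv
  refine ⟨2 * a, p * r, hu, ?_⟩
  have hr' := congrArg (algebraMap (ZMod 3)[X] F) hr
  rw [map_mul, map_one] at hr'
  rw [map_mul, ← hv.1, mul_assoc, hr', mul_one]

theorem isQuad_ringOfIntegers {F : Type*} [Field F] [Algebra (ZMod 3)[X] F]
    [IsFractionRing (ZMod 3)[X] F] (f : F[X])
    (hf : f = X ^ 2 - C (algebraMap (ZMod 3)[X] F quintic)) [Fact (Irreducible f)] :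
    ∃ y, IsQuad (algebraMap (ZMod 3)[X]
      (FunctionField.ringOfIntegers (ZMod 3) (AdjoinRoot f))) y := by
  have hmon : f.Monic := hf ▸ monic_X_pow_sub_C _ two_ne_zero
  have hdeg : f.natDegree = 2 := hf ▸ natDegree_X_pow_sub_C
  set K := AdjoinRoot f
  set d : F := algebraMap (ZMod 3)[X] F quintic with hd
  set y : K := AdjoinRoot.root f with hy
  have hAF : Function.Injective (algebraMap (ZMod 3)[X] F) := IsFractionRing.injective _ _
  have hFK : Function.Injective (algebraMap F K) := (algebraMap F K).injective
  have hy2 : y * y = algebraMap F K d := by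
    have := AdjoinRoot.eval₂_root f
    conv at this => lhs; arg 3; rw [hf]
    simp only [eval₂_sub, eval₂_pow, eval₂_X, eval₂_C] at this
    rw [← pow_two]
    exact sub_eq_zero.1 this
  have hrep (z : K) : ∃ u v, z = algebraMap F K u + algebraMap F K v * y := by
    obtain ⟨g, rfl⟩ := AdjoinRoot.mk_surjective z
    have hlt : (g %ₘ f).natDegree < 2 := hdeg ▸ natDegree_modByMonic_lt g hmon (by
      intro h1; rw [h1] at hdeg; simp at hdeg)
    obtain ⟨v, u, hvu⟩ :=
      exists_eq_X_add_C_of_natDegree_le_one (show (g %ₘ f).natDegree ≤ 1 by omega)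
    refine ⟨u, v, ?_⟩
    have h1 : AdjoinRoot.mk f g = AdjoinRoot.mk f (g %ₘ f) := by
      conv_lhs => rw [← modByMonic_add_div g f]
      simp
    rw [h1, hvu, map_add, map_mul, AdjoinRoot.mk_C, AdjoinRoot.mk_C, AdjoinRoot.mk_X, add_comm]
    rfl
  have hind (u v : F) (h0 : algebraMap F K u + algebraMap F K v * y = 0) : u = 0 ∧ v = 0 := by
    have h1 : AdjoinRoot.mk f (C v * X + C u) = 0 := by
      rw [map_add, map_mul, AdjoinRoot.mk_C, AdjoinRoot.mk_C, AdjoinRoot.mk_X, add_comm]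
      exact h0
    rw [AdjoinRoot.mk_eq_zero] at h1
    have h2 := eq_zero_of_dvd_of_degree_lt h1 (by
      refine degree_linear_le.trans_lt ?_
      rw [degree_eq_natDegree hmon.ne_zero, hdeg]; norm_num)
    have h3 := congrArg (coeff · 1) h2
    have h4 := congrArg (coeff · 0) h2
    simp at h3 h4
    exact ⟨h4, h3⟩
  have htow (a : (ZMod 3)[X]) : algebraMap F K (algebraMap _ F a) = algebraMap _ K a :=
    (IsScalarTower.algebraMap_apply (ZMod 3)[X] F K a).symm
  have hyint : IsIntegral (ZMod 3)[X] y :=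
    ⟨X ^ 2 - C quintic, monic_X_pow_sub_C _ two_ne_zero, by
      simp only [eval₂_sub, eval₂_pow, eval₂_X, eval₂_C]
      rw [pow_two, hy2, htow, sub_self]⟩
  -- The conjugation `y ↦ -y`.
  let σ : K →ₐ[F] K := AdjoinRoot.liftAlgHom f (Algebra.ofId F K) (-y) (by
    conv_lhs => arg 3; rw [hf]
    simp only [eval₂_sub, eval₂_pow, eval₂_X, eval₂_C]
    rw [neg_sq, pow_two, hy2]
    exact sub_self _)
  have hσ : σ y = -y := AdjoinRoot.liftAlgHom_root ..
  refine ⟨⟨y, hyint⟩, ?_, ?_, ?_⟩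
  · apply Subtype.ext
    exact hy2.trans (htow _)
  · rintro ⟨z, hz⟩
    obtain ⟨u, v, rfl⟩ := hrep z
    obtain ⟨a, b, rfl, rfl⟩ := exists_of_isIntegral hd hy2 σ hσ u v hz
    refine ⟨a, b, Subtype.ext ?_⟩
    change _ = algebraMap _ K a + algebraMap _ K b * y
    rw [← htow, ← htow]
  · intro a b hab
    have h1 : algebraMap _ K a + algebraMap _ K b * y = 0 := congrArg Subtype.val hab
    rw [← htow, ← htow] at h1
    obtain ⟨h2, h3⟩ := hind _ _ h1
    exact ⟨hAF (h2.trans (map_zero _).symm), hAF (h3.trans (map_zero _).symm)⟩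

theorem isSeparable_adjoinRoot {F : Type*} [Field F] (f : F[X]) [Fact (Irreducible f)]
    (hs : f.Separable) : Algebra.IsSeparable F (AdjoinRoot f) := by
  have hroot : IsSeparable F (AdjoinRoot.root f) :=
    hs.of_dvd (minpoly.dvd F _ (by simp))
  have htop : IntermediateField.adjoin F {AdjoinRoot.root f} = ⊤ := by
    rw [eq_top_iff]
    intro z _
    have : z ∈ Algebra.adjoin F {AdjoinRoot.root f} := by
      rw [AdjoinRoot.adjoinRoot_eq_top]; trivial
    exact IntermediateField.algebra_adjoin_le_adjoin F _ this
  have h := (IntermediateField.isSeparable_adjoin_simple_iff_isSeparable F (AdjoinRoot f)).2 hroot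
  rw [htop] at h
  exact AlgEquiv.Algebra.isSeparable IntermediateField.topEquiv

theorem class_group_statement_15
    (f : Polynomial (RatFunc (ZMod 3)))
    (hf : f = X ^ 2 - C (2 * (RatFunc.X + 2) * (RatFunc.X ^ 2 + 1) * (RatFunc.X ^ 2 + RatFunc.X + 2)))
    [Fact (Irreducible f)] :
    Nat.card (ClassGroup (FunctionField.ringOfIntegers (ZMod 3) (AdjoinRoot f))) = 4 ∧
      (∀ c : ClassGroup (FunctionField.ringOfIntegers (ZMod 3) (AdjoinRoot f)), c ^ 2 = 1) ∧
      Nonempty (ClassGroup (FunctionField.ringOfIntegers (ZMod 3) (AdjoinRoot f)) ≃* Multiplicative (ZMod 2 × ZMod 2)) := by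
  have hf' : f = X ^ 2 - C (algebraMap (ZMod 3)[X] (RatFunc (ZMod 3)) quintic) := by
    rw [hf, quintic]
    simp only [map_mul, map_add, map_pow, map_one, map_ofNat, RatFunc.algebraMap_X]
  have hmon : f.Monic := hf' ▸ monic_X_pow_sub_C _ two_ne_zero
  have : FunctionField (ZMod 3) (AdjoinRoot f) := hmon.finite_adjoinRoot
  have h2 : ((2 : ℕ) : RatFunc (ZMod 3)) ≠ 0 := by
    intro h0
    have := RatFunc.algebraMap_ne_zero (isUnit_two.ne_zero)
    apply this; rw [map_ofNat]; exact_mod_cast h0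
  have : Algebra.IsSeparable (RatFunc (ZMod 3)) (AdjoinRoot f) :=
    isSeparable_adjoinRoot f (by
      rw [hf']
      exact separable_X_pow_sub_C _ h2 (RatFunc.algebraMap_ne_zero quintic_ne_zero))
  obtain ⟨y, hy⟩ := isQuad_ringOfIntegers f hf'
  have hK := hy.isKleinFour
  refine ⟨hK.card_four, fun c => ?_, IsKleinFour.nonempty_mulEquiv⟩
  rw [← hK.exponent_two]
  exact Monoid.pow_exponent_eq_one c
end
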